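/- arXiv:1811.05209 — 2 statements merged into one kernel-verified Lean document; each statement's English description precedes it below -/
import Mathlib

section
/- There exists a constant $c_n > 0$ depending only on the dimension $n$ such that the following holds: for every weight $w$ on $\mathbb{R}^n$ with $[w]_{A_\infty} < \infty$, setting $\delta = \frac{1}{c_n [w]_{A_\infty}}$, for every cube $Q$ with sides parallel to the coordinate axes one has $\left( \frac{1}{|Q|} \int_Q w^{1+\delta} \right)^{1/(1+\delta)} \le (2^n + 1) \frac{1}{|Q|} \int_Q w$. -/
/-!
The sharp reverse Hölder inequality is obtained from a dyadic maximal function adapted to the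
given cube `Q`, with a telescoping sum over generations in place of an integration over level sets.

Let `a_k(x)` be the average of `w` over the generation `k` dyadic subcube of `Q` containing `x`,
and let `M_k = max (a_0, …, a_k)`. These are finite and bounded on `Q`, so every integral below is
finite and can be absorbed. On a cell `P` of generation `k + 1` both `M_k` and `M_{k+1}` are
constant, and either they agree or `M_{k+1} = a_{k+1} = w(P)/|P|`. Suppose that `h` satisfies
`∫_P h ≤ A w(P)` for the cells of the second kind and for `P = Q`. Since `M_{k+1} ≤ 2ⁿ M_k`, the
elementary bound
`v (v^ε - u^ε) ≤ 2ⁿ ε (v^(1+ε) - u^(1+ε))` for `u ≤ v ≤ 2ⁿ u` and `0 ≤ ε ≤ 1` (`rpow_step_aux`)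
yields, after summation over cells and generations (`lintegral_telescope`),
`∫_Q h M_N^ε ≤ A a_0^(1+ε) |Q| + 2ⁿ ε A ∫_Q M_N^(1+ε)`.

This is used twice (`lintegral_mul_mx_le`).
* For `h = M_N` and `A = [w]_{A_∞}`: on a cell `P` of the second kind only later generations
  contribute to `M_N`, so `M_N ≤ M(χ_P w)` there (`mx_le_maxOp`), and `∫_P M(χ_P w) ≤ A w(P)`.
  If `2ⁿ ε A ≤ 1/2`, absorption gives `∫_Q M_N^(1+ε) ≤ 2 A a_0^(1+ε) |Q|`.
* For `h = w` and constant `1`: together with the previous bound,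
  `∫_Q w M_N^ε ≤ 2 a_0^(1+ε) |Q|`.

By Lebesgue differentiation `a_N → w` almost everywhere, and Fatou's lemma gives
`∫_Q w^(1+ε) ≤ 2 a_0^(1+ε) |Q|` (`lintegral_rpow_le`). The constant `2` is at most `2ⁿ + 1`.
-/

open MeasureTheory ENNReal Metric Set Filter

noncomputable section

/-- The uncentered Hardy–Littlewood maximal operator over axis-parallel cubes.
Axis-parallel cubes in `ℝⁿ = Fin n → ℝ` are exactly the closed balls of the
sup metric, so a cube with center `c` and side length `2r` is `closedBall c r`. -/
def maxOp (n : ℕ) (f : (Fin n → ℝ) → ℝ≥0∞) (x : Fin n → ℝ) : ℝ≥0∞ :=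
  ⨆ (c : Fin n → ℝ) (r : ℝ) (_ : 0 < r) (_ : x ∈ closedBall c r),
    (volume (closedBall c r))⁻¹ * ∫⁻ y in closedBall c r, f y

/-- `ℝ≥0∞`-valued characteristic function of a set. -/
def chi (n : ℕ) (Q : Set (Fin n → ℝ)) : (Fin n → ℝ) → ℝ≥0∞ := Q.indicator 1

/-- The `C_p`-tail of the weight `w` at the cube `Q`: `∫_{ℝⁿ} (Mχ_Q)^p w`. -/
def cpTail (n : ℕ) (p : ℝ) (w : (Fin n → ℝ) → ℝ) (Q : Set (Fin n → ℝ)) : ℝ≥0∞ :=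
  ∫⁻ x, (maxOp n (chi n Q) x) ^ p * ENNReal.ofReal (w x)

/-- The `C_p` constant `[w]_{C_p} = sup_Q (∫_Q M(χ_Q w)) / (∫_{ℝⁿ} (Mχ_Q)^p w)`. -/
def cpConst (n : ℕ) (p : ℝ) (w : (Fin n → ℝ) → ℝ) : ℝ≥0∞ :=
  ⨆ (c : Fin n → ℝ) (r : ℝ) (_ : 0 < r),
    (∫⁻ x in closedBall c r,
        maxOp n ((closedBall c r).indicator fun y => ENNReal.ofReal (w y)) x) /
      cpTail n p w (closedBall c r)


/-- The Fujii–Wilson `A_∞` constant `[w]_{A_∞} = sup_Q (1/w(Q)) ∫_Q M(χ_Q w)`. -/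
def ainftyConst (n : ℕ) (w : (Fin n → ℝ) → ℝ) : ℝ≥0∞ :=
  ⨆ (c : Fin n → ℝ) (r : ℝ) (_ : 0 < r),
    (∫⁻ x in closedBall c r,
        maxOp n ((closedBall c r).indicator fun y => ENNReal.ofReal (w y)) x) /
      ∫⁻ x in closedBall c r, ENNReal.ofReal (w x)

/-! ### Dyadic cells of a cube -/

/-- Side length of the dyadic cells of generation `k` of the cube `closedBall c r`. -/
def side (r : ℝ) (k : ℕ) : ℝ := 2 * r / 2 ^ k

/-- Integer coordinates of the generation `k` dyadic cell containing `x`, in the dyadic grid of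
all of `ℝⁿ` generated by the half-open cube with centre `c` and side `2r` (which has index `0`
at generation `0`). -/
def idx {n : ℕ} (c : Fin n → ℝ) (r : ℝ) (k : ℕ) (x : Fin n → ℝ) : Fin n → ℤ :=
  fun i => ⌊(x i - (c i - r)) / side r k⌋

/-- The half-open dyadic cell of generation `k` containing `x`. -/
def cell {n : ℕ} (c : Fin n → ℝ) (r : ℝ) (k : ℕ) (x : Fin n → ℝ) : Set (Fin n → ℝ) :=
  {y | idx c r k y = idx c r k x}

/-- Centre of the dyadic cell of generation `k` containing `x`. -/
def ctr {n : ℕ} (c : Fin n → ℝ) (r : ℝ) (k : ℕ) (x : Fin n → ℝ) : Fin n → ℝ :=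
  fun i => (c i - r) + (idx c r k x i + 1 / 2) * side r k

/-- Average of `W` over the dyadic cell of generation `k` containing `x`. -/
def avg {n : ℕ} (W : (Fin n → ℝ) → ℝ≥0∞) (c : Fin n → ℝ) (r : ℝ) (k : ℕ) (x : Fin n → ℝ) :
    ℝ≥0∞ :=
  (volume (cell c r k x))⁻¹ * ∫⁻ y in cell c r k x, W y

/-- Dyadic maximal function truncated at generation `k`: the largest of the averages of `W` over
the dyadic cells of generations `0, …, k` containing `x`. -/
def mx {n : ℕ} (W : (Fin n → ℝ) → ℝ≥0∞) (c : Fin n → ℝ) (r : ℝ) (k : ℕ) (x : Fin n → ℝ) :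
    ℝ≥0∞ :=
  partialSups (fun j => avg W c r j x) k

section Geometry

variable {n : ℕ} {c : Fin n → ℝ} {r : ℝ}

lemma side_pos (hr : 0 < r) (k : ℕ) : 0 < side r k := by unfold side; positivity

lemma side_succ (k : ℕ) : side r k = 2 * side r (k + 1) := by
  unfold side; field_simp; ring

lemma mem_cell_self (k : ℕ) (x : Fin n → ℝ) : x ∈ cell c r k x := rfl

lemma cell_eq_of_mem {k : ℕ} {x y : Fin n → ℝ} (h : y ∈ cell c r k x) :
    cell c r k y = cell c r k x := by
  unfold cell at *; simp only [mem_ofPred_eq] at h; rw [h]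

lemma floor_eq_half (t : ℝ) : ⌊t⌋ = ⌊2 * t⌋ / 2 := by
  rw [Int.floor_eq_iff]
  have h1 := Int.floor_le (2 * t)
  have h2 := Int.lt_floor_add_one (2 * t)
  have h3 : 2 * (⌊2 * t⌋ / 2) ≤ ⌊2 * t⌋ := by omega
  have h4 : ⌊2 * t⌋ ≤ 2 * (⌊2 * t⌋ / 2) + 1 := by omega
  have h3' : (2 : ℝ) * ((⌊2 * t⌋ / 2 : ℤ) : ℝ) ≤ ⌊2 * t⌋ := by exact_mod_cast h3
  have h4' : (⌊2 * t⌋ : ℝ) ≤ 2 * ((⌊2 * t⌋ / 2 : ℤ) : ℝ) + 1 := by exact_mod_cast h4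
  constructor <;> linarith

lemma idx_succ (hr : 0 < r) (k : ℕ) (x : Fin n → ℝ) (i : Fin n) :
    idx c r k x i = idx c r (k + 1) x i / 2 := by
  unfold idx
  rw [floor_eq_half, side_succ]
  have := side_pos hr (k + 1)
  congr 2
  field_simp

lemma cell_succ_subset (hr : 0 < r) (k : ℕ) (x : Fin n → ℝ) :
    cell c r (k + 1) x ⊆ cell c r k x := by
  intro y hy
  change idx c r (k + 1) y = idx c r (k + 1) x at hy
  change idx c r k y = idx c r k x
  ext i
  rw [idx_succ hr k y, idx_succ hr k x, hy]

lemma cell_anti (hr : 0 < r) {j k : ℕ} (h : j ≤ k) (x : Fin n → ℝ) :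
    cell c r k x ⊆ cell c r j x :=
  antitone_nat_of_succ_le (f := fun k => cell c r k x) (fun k => cell_succ_subset hr k x) h

lemma cell_eq_pi (hr : 0 < r) (k : ℕ) (x : Fin n → ℝ) :
    cell c r k x = univ.pi fun i => Ico (ctr c r k x i - side r k / 2)
      (ctr c r k x i + side r k / 2) := by
  have hs := side_pos hr k
  ext y
  simp only [cell, mem_ofPred_eq, funext_iff, mem_univ_pi, mem_Ico]
  refine forall_congr' fun i => ?_
  rw [idx, Int.floor_eq_iff, le_div_iff₀ hs, div_lt_iff₀ hs, ctr]
  constructor <;> rintro ⟨h1, h2⟩ <;> constructor <;> linarith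

lemma closedBall_ctr_eq_Icc (hr : 0 < r) (k : ℕ) (x : Fin n → ℝ) :
    closedBall (ctr c r k x) (side r k / 2) = Icc (fun i => ctr c r k x i - side r k / 2)
      (fun i => ctr c r k x i + side r k / 2) := by
  have := side_pos hr k
  rw [closedBall_pi _ (by positivity), ← pi_univ_Icc]
  simp only [Real.closedBall_eq_Icc]

lemma cell_ae_eq (hr : 0 < r) (k : ℕ) (x : Fin n → ℝ) :
    cell c r k x =ᵐ[volume] closedBall (ctr c r k x) (side r k / 2) := by
  rw [cell_eq_pi hr, closedBall_ctr_eq_Icc hr, volume_pi]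
  exact Measure.univ_pi_Ico_ae_eq_Icc

lemma cell_subset_closedBall (hr : 0 < r) (k : ℕ) (x : Fin n → ℝ) :
    cell c r k x ⊆ closedBall (ctr c r k x) (side r k / 2) := by
  rw [cell_eq_pi hr, closedBall_ctr_eq_Icc hr, ← pi_univ_Icc]
  exact pi_mono fun i _ => Ico_subset_Icc_self

lemma ctr_zero (hr : 0 < r) : ctr c r 0 c = c := by
  ext i
  have h : idx c r 0 c i = 0 := by
    simp only [idx, side, Int.floor_eq_iff]
    have : (c i - (c i - r)) / (2 * r / 2 ^ 0) = 1 / 2 := by field_simp; ring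
    rw [this]; norm_num
  simp only [ctr, h, side]
  push_cast; ring

/-- Up to a null set, the generation `0` cell of the centre is the cube itself. -/
lemma cell_zero_ae_eq (hr : 0 < r) : cell c r 0 c =ᵐ[volume] closedBall c r := by
  have h := cell_ae_eq (c := c) hr 0 c
  rw [ctr_zero hr] at h
  simpa [side] using h

lemma volume_cell (hr : 0 < r) (k : ℕ) (x : Fin n → ℝ) :
    volume (cell c r k x) = ENNReal.ofReal (side r k ^ n) := by
  rw [measure_congr (cell_ae_eq hr k x),
    Real.volume_pi_closedBall _ (by have := side_pos hr k; positivity)]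
  simp [mul_div_cancel₀]

lemma volume_cell_ne_zero (hr : 0 < r) (k : ℕ) (x : Fin n → ℝ) : volume (cell c r k x) ≠ 0 := by
  rw [volume_cell hr]; have := side_pos hr k; simp; positivity

lemma volume_cell_ne_top (hr : 0 < r) (k : ℕ) (x : Fin n → ℝ) : volume (cell c r k x) ≠ ⊤ := by
  rw [volume_cell hr]; simp

lemma volume_cell_succ (hr : 0 < r) (k : ℕ) (x : Fin n → ℝ) :
    volume (cell c r k x) = 2 ^ n * volume (cell c r (k + 1) x) := by
  rw [volume_cell hr, volume_cell hr, side_succ, mul_pow, ENNReal.ofReal_mul (by positivity),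
    ENNReal.ofReal_pow (by norm_num)]
  simp

lemma measurable_idx (k : ℕ) : Measurable (idx c r k) := by
  unfold idx
  fun_prop

lemma measurableSet_cell (k : ℕ) (x : Fin n → ℝ) : MeasurableSet (cell c r k x) :=
  measurable_idx k (measurableSet_singleton (idx c r k x))

/-- Integrals over a cell are compared by comparing them over the subcells of a later
generation. Two terms on each side allow for the telescoping estimate `lintegral_step`. -/
lemma lintegral_cell_le (hr : 0 < r) (k : ℕ) {f g f₁ g₁ : (Fin n → ℝ) → ℝ≥0∞}
    (h : ∀ x ∈ cell c r 0 c, (∫⁻ y in cell c r k x, f y) + (∫⁻ y in cell c r k x, g y) ≤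
      (∫⁻ y in cell c r k x, f₁ y) + (∫⁻ y in cell c r k x, g₁ y)) :
    (∫⁻ y in cell c r 0 c, f y) + (∫⁻ y in cell c r 0 c, g y) ≤
      (∫⁻ y in cell c r 0 c, f₁ y) + (∫⁻ y in cell c r 0 c, g₁ y) := by
  have hm : ∀ m : Fin n → ℤ, MeasurableSet (cell c r 0 c ∩ idx c r k ⁻¹' {m}) := fun m =>
    (measurableSet_cell 0 c).inter (measurable_idx k (measurableSet_singleton m))
  have key : ∀ u : (Fin n → ℝ) → ℝ≥0∞, ∫⁻ y in cell c r 0 c, u y =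
      ∑' m : Fin n → ℤ, ∫⁻ y in cell c r 0 c ∩ idx c r k ⁻¹' {m}, u y := by
    intro u
    rw [← lintegral_iUnion hm]
    · congr 2
      ext y; simp
    · intro m m' hmm
      refine Set.disjoint_left.2 fun y hy hy' => hmm ?_
      exact hy.2.symm.trans hy'.2
  rw [key f, key g, key f₁, key g₁, ← ENNReal.tsum_add, ← ENNReal.tsum_add]
  refine ENNReal.tsum_le_tsum fun m => ?_
  rcases (cell c r 0 c ∩ idx c r k ⁻¹' {m}).eq_empty_or_nonempty with he | ⟨x, hx0, hx⟩
  · simp [he]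
  · have : cell c r 0 c ∩ idx c r k ⁻¹' {m} = cell c r k x := by
      have hx' : idx c r k x = m := hx
      have h1 : idx c r k ⁻¹' {m} = cell c r k x := by
        subst hx'; rfl
      rw [h1, inter_eq_right, ← cell_eq_of_mem hx0]
      exact cell_anti hr (Nat.zero_le k) x
    rw [this]
    exact h x hx0

end Geometry

/-! ### Dyadic averages and the truncated maximal function -/

section Averages

variable {n : ℕ} {c : Fin n → ℝ} {r : ℝ} {W : (Fin n → ℝ) → ℝ≥0∞}

lemma avg_eq_of_mem {k : ℕ} {x y : Fin n → ℝ} (h : y ∈ cell c r k x) :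
    avg W c r k y = avg W c r k x := by
  unfold avg; rw [cell_eq_of_mem h]

lemma mx_eq_of_mem (hr : 0 < r) {k : ℕ} {x y : Fin n → ℝ} (h : y ∈ cell c r k x) :
    mx W c r k y = mx W c r k x := by
  unfold mx
  rw [partialSups_apply, partialSups_apply]
  refine Finset.sup'_congr _ rfl fun j hj => avg_eq_of_mem ?_
  exact cell_anti hr (Finset.mem_Iic.1 hj) x h

lemma mx_zero (x : Fin n → ℝ) : mx W c r 0 x = avg W c r 0 x := by simp [mx]

lemma mx_succ (k : ℕ) (x : Fin n → ℝ) :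
    mx W c r (k + 1) x = max (mx W c r k x) (avg W c r (k + 1) x) := by
  simp only [mx, partialSups_add_one]

lemma avg_le_mx {j k : ℕ} (h : j ≤ k) (x : Fin n → ℝ) : avg W c r j x ≤ mx W c r k x :=
  le_partialSups_of_le (fun j => avg W c r j x) h

lemma lintegral_cell_eq (hr : 0 < r) (k : ℕ) (x : Fin n → ℝ) :
    ∫⁻ y in cell c r k x, W y = avg W c r k x * volume (cell c r k x) := by
  rw [avg, mul_comm, ← mul_assoc, ENNReal.mul_inv_cancel (volume_cell_ne_zero hr k x)
    (volume_cell_ne_top hr k x), one_mul]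

lemma lintegral_cell_eq_closedBall (hr : 0 < r) (k : ℕ) (x : Fin n → ℝ) :
    ∫⁻ y in cell c r k x, W y = ∫⁻ y in closedBall (ctr c r k x) (side r k / 2), W y :=
  setLIntegral_congr (cell_ae_eq hr k x)

lemma avg_eq_closedBall (hr : 0 < r) (k : ℕ) (x : Fin n → ℝ) :
    avg W c r k x = (volume (closedBall (ctr c r k x) (side r k / 2)))⁻¹ *
      ∫⁻ y in closedBall (ctr c r k x) (side r k / 2), W y := by
  rw [avg, lintegral_cell_eq_closedBall hr, measure_congr (cell_ae_eq hr k x)]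

lemma avg_ne_top (hr : 0 < r) (hW : ∀ a s, ∫⁻ y in closedBall a s, W y ≠ ⊤) (k : ℕ)
    (x : Fin n → ℝ) : avg W c r k x ≠ ⊤ := by
  unfold avg
  rw [lintegral_cell_eq_closedBall hr]
  exact ENNReal.mul_ne_top (ENNReal.inv_ne_top.2 (volume_cell_ne_zero hr k x)) (hW _ _)

lemma avg_succ_le (hr : 0 < r) (k : ℕ) (x : Fin n → ℝ) :
    avg W c r (k + 1) x ≤ 2 ^ n * avg W c r k x := by
  have h2 : (2 : ℝ≥0∞) ^ n * (2 ^ n * volume (cell c r (k + 1) x))⁻¹ =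
      (volume (cell c r (k + 1) x))⁻¹ := by
    rw [ENNReal.mul_inv (Or.inl (by simp)) (Or.inl (by simp)), ← mul_assoc,
      ENNReal.mul_inv_cancel (by simp) (by simp), one_mul]
  unfold avg
  rw [volume_cell_succ hr k, ← mul_assoc, h2]
  gcongr
  exact cell_succ_subset hr k x

lemma mx_succ_le (hr : 0 < r) (k : ℕ) (x : Fin n → ℝ) :
    mx W c r (k + 1) x ≤ 2 ^ n * mx W c r k x := by
  rw [mx_succ]
  refine max_le ?_ ((avg_succ_le hr k x).trans (by gcongr; exact avg_le_mx le_rfl x))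
  calc mx W c r k x = 1 * mx W c r k x := (one_mul _).symm
    _ ≤ _ := by gcongr; exact one_le_pow₀ (by norm_num)

lemma mx_le (hr : 0 < r) (k : ℕ) (x : Fin n → ℝ) :
    mx W c r k x ≤ (2 ^ n) ^ k * avg W c r 0 x := by
  induction k with
  | zero => simp [mx_zero]
  | succ k ih =>
    refine (mx_succ_le hr k x).trans ?_
    rw [pow_succ' _ k, mul_assoc]
    gcongr

lemma mx_ne_top (hr : 0 < r) (hW : ∀ a s, ∫⁻ y in closedBall a s, W y ≠ ⊤) (k : ℕ)
    (x : Fin n → ℝ) : mx W c r k x ≠ ⊤ :=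
  ne_top_of_le_ne_top (ENNReal.mul_ne_top (by simp) (avg_ne_top hr hW 0 x)) (mx_le hr k x)

lemma measurable_avg (k : ℕ) : Measurable (avg W c r k) := by
  have : avg W c r k = (fun m : Fin n → ℤ => (volume (idx c r k ⁻¹' {m}))⁻¹ *
      ∫⁻ y in idx c r k ⁻¹' {m}, W y) ∘ idx c r k := rfl
  rw [this]
  exact (Measurable.of_discrete).comp (measurable_idx k)

end Averages

/-! ### The telescoping estimate -/

section Telescoping

/-- The elementary inequality `v (v^ε - u^ε) ≤ K ε (v^(1+ε) - u^(1+ε))` for `u ≤ v ≤ K u`. -/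
lemma rpow_step_aux {K ε u v : ℝ} (hK : 0 ≤ K) (hε : 0 ≤ ε) (hε1 : ε ≤ 1) (hu : 0 ≤ u)
    (huv : u ≤ v) (hvK : v ≤ K * u) :
    v * (v ^ ε - u ^ ε) ≤ K * ε * (v ^ (1 + ε) - u ^ (1 + ε)) := by
  rcases hu.eq_or_lt with rfl | hu
  · have : v = 0 := by linarith
    subst this
    simp
  have hv : 0 < v := hu.trans_le huv
  have e1 : v ^ ε = u ^ ε * (v / u) ^ ε := by
    rw [← Real.mul_rpow hu.le (by positivity), mul_div_cancel₀ _ hu.ne']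
  have hb : (v / u) ^ ε ≤ 1 + ε * (v / u - 1) := by
    have h0 : 0 ≤ v / u := by positivity
    have := rpow_one_add_le_one_add_mul_self (s := v / u - 1) (by linarith) hε hε1
    simpa using this
  have hp : 0 < u ^ ε := by positivity
  have h1 : u ^ ε ≤ v ^ ε := Real.rpow_le_rpow hu.le huv hε
  rw [Real.rpow_add hu, Real.rpow_add hv, Real.rpow_one, Real.rpow_one]
  -- concavity of `t ↦ t^ε` gives the first-order bound on the increment
  have h2 : u * (v ^ ε - u ^ ε) ≤ ε * (v - u) * u ^ ε := by
    rw [e1]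
    have h3 : u * (u ^ ε * (v / u) ^ ε - u ^ ε) ≤ u * (u ^ ε * (1 + ε * (v / u - 1)) - u ^ ε) := by
      gcongr
    refine h3.trans (le_of_eq ?_)
    field_simp
    ring
  have h4 : (v - u) * u ^ ε ≤ v * v ^ ε - u * u ^ ε := by nlinarith
  calc v * (v ^ ε - u ^ ε) ≤ K * u * (v ^ ε - u ^ ε) := by
        gcongr
    _ = K * (u * (v ^ ε - u ^ ε)) := by ring
    _ ≤ K * (ε * (v - u) * u ^ ε) := by gcongr
    _ = K * ε * ((v - u) * u ^ ε) := by ring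
    _ ≤ _ := by gcongr

lemma ennreal_step {K ε : ℝ} {A T p u v : ℝ≥0∞} (hK : 0 ≤ K) (hε : 0 ≤ ε) (hε1 : ε ≤ 1)
    (hA : A ≠ ⊤) (hp : p ≠ ⊤) (hv : v ≠ ⊤) (huv : u ≤ v) (hvK : v ≤ ENNReal.ofReal K * u)
    (hT : T ≤ A * (v * p)) :
    T * v ^ ε + ENNReal.ofReal (K * ε) * A * (u ^ (1 + ε) * p) ≤
      T * u ^ ε + ENNReal.ofReal (K * ε) * A * (v ^ (1 + ε) * p) := by
  have hu : u ≠ ⊤ := ne_top_of_le_ne_top hv huv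
  have hT' : T ≠ ⊤ :=
    ne_top_of_le_ne_top (ENNReal.mul_ne_top hA (ENNReal.mul_ne_top hv hp)) hT
  obtain ⟨K', rfl⟩ : ∃ K' : NNReal, (K' : ℝ) = K := ⟨⟨K, hK⟩, rfl⟩
  obtain ⟨e', rfl⟩ : ∃ e' : NNReal, (e' : ℝ) = ε := ⟨⟨ε, hε⟩, rfl⟩
  lift A to NNReal using hA
  lift p to NNReal using hp
  lift u to NNReal using hu
  lift v to NNReal using hv
  lift T to NNReal using hT'
  rw [← NNReal.coe_mul, ENNReal.ofReal_coe_nnreal]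
  rw [ENNReal.ofReal_coe_nnreal] at hvK
  have h1e : (0 : ℝ) ≤ 1 + e' := by positivity
  rw [← ENNReal.coe_rpow_of_nonneg _ hε, ← ENNReal.coe_rpow_of_nonneg _ hε,
    ← ENNReal.coe_rpow_of_nonneg _ h1e, ← ENNReal.coe_rpow_of_nonneg _ h1e]
  norm_cast at *
  rw [← NNReal.coe_le_coe] at *
  push_cast at *
  have haux := rpow_step_aux hK hε hε1 u.2 huv hvK
  have hmono : (u : ℝ) ^ (e' : ℝ) ≤ (v : ℝ) ^ (e' : ℝ) := Real.rpow_le_rpow u.2 huv hε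
  have h1 : (T : ℝ) * ((v : ℝ) ^ (e' : ℝ) - (u : ℝ) ^ (e' : ℝ)) ≤
      A * (v * p) * ((v : ℝ) ^ (e' : ℝ) - (u : ℝ) ^ (e' : ℝ)) := by
    gcongr
  have h2 : (A : ℝ) * p * (v * ((v : ℝ) ^ (e' : ℝ) - (u : ℝ) ^ (e' : ℝ))) ≤
      A * p * (K' * e' * ((v : ℝ) ^ (1 + e' : ℝ) - (u : ℝ) ^ (1 + e' : ℝ))) :=
    mul_le_mul_of_nonneg_left haux (by positivity)
  linarith

variable {n : ℕ} {c : Fin n → ℝ} {r : ℝ} {W : (Fin n → ℝ) → ℝ≥0∞}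

lemma lintegral_mul_mx (hr : 0 < r) (hW : ∀ a s, ∫⁻ y in closedBall a s, W y ≠ ⊤)
    {ε : ℝ} (hε : 0 ≤ ε) (h : (Fin n → ℝ) → ℝ≥0∞) {j k : ℕ} (hjk : j ≤ k) (x : Fin n → ℝ) :
    ∫⁻ y in cell c r k x, h y * mx W c r j y ^ ε =
      (∫⁻ y in cell c r k x, h y) * mx W c r j x ^ ε := by
  rw [← lintegral_mul_const' _ _ (ENNReal.rpow_ne_top_of_nonneg hε (mx_ne_top hr hW j x))]
  refine setLIntegral_congr_fun (measurableSet_cell k x) fun y hy => ?_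
  rw [mx_eq_of_mem hr (cell_anti hr hjk x hy)]

/-- One step of the telescoping estimate. On a cell of generation `k + 1` either the truncated
maximal function does not change from generation `k` to `k + 1`, or it becomes the average over
that cell, and then the hypothesis on `h` applies. -/
lemma lintegral_step (hr : 0 < r) (hW : ∀ a s, ∫⁻ y in closedBall a s, W y ≠ ⊤)
    {ε : ℝ} (hε : 0 ≤ ε) (hε1 : ε ≤ 1) {A : ℝ≥0∞} (hA : A ≠ ⊤) (h : (Fin n → ℝ) → ℝ≥0∞) (k : ℕ)
    (hk : ∀ x, avg W c r (k + 1) x = mx W c r (k + 1) x →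
      ∫⁻ y in cell c r (k + 1) x, h y ≤ A * ∫⁻ y in cell c r (k + 1) x, W y) :
    (∫⁻ y in cell c r 0 c, h y * mx W c r (k + 1) y ^ ε) +
        (∫⁻ y in cell c r 0 c, ENNReal.ofReal (2 ^ n * ε) * A * mx W c r k y ^ (1 + ε)) ≤
      (∫⁻ y in cell c r 0 c, h y * mx W c r k y ^ ε) +
        (∫⁻ y in cell c r 0 c, ENNReal.ofReal (2 ^ n * ε) * A * mx W c r (k + 1) y ^ (1 + ε)) := by
  refine lintegral_cell_le hr (k + 1) fun x _ => ?_
  have h1e : 0 ≤ 1 + ε := by linarith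
  rw [lintegral_mul_mx hr hW hε h le_rfl, lintegral_mul_mx hr hW hε h (Nat.le_succ k),
    lintegral_mul_mx hr hW h1e _ le_rfl, lintegral_mul_mx hr hW h1e _ (Nat.le_succ k),
    setLIntegral_const]
  have huv : mx W c r k x ≤ mx W c r (k + 1) x := by rw [mx_succ]; exact le_max_left _ _
  by_cases hc : avg W c r (k + 1) x = mx W c r (k + 1) x
  · have hT := hk x hc
    rw [lintegral_cell_eq (W := W) hr, hc] at hT
    have hvK : mx W c r (k + 1) x ≤ ENNReal.ofReal (2 ^ n) * mx W c r k x := by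
      rw [ENNReal.ofReal_pow (by norm_num)]
      simpa using mx_succ_le hr k x
    have := ennreal_step (K := 2 ^ n) (by positivity) hε hε1 hA
      (volume_cell_ne_top (c := c) hr (k + 1) x) (mx_ne_top hr hW (k + 1) x) huv hvK hT
    convert this using 2 <;> ring
  · have : mx W c r (k + 1) x = mx W c r k x := by
      rw [mx_succ] at hc ⊢
      rcases max_choice (mx W c r k x) (avg W c r (k + 1) x) with h' | h'
      · exact h'
      · exact absurd h'.symm hc
    rw [this]

lemma lintegral_mx_ne_top (hr : 0 < r) (hW : ∀ a s, ∫⁻ y in closedBall a s, W y ≠ ⊤)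
    {p : ℝ} (hp : 0 ≤ p) (N : ℕ) : ∫⁻ y in cell c r 0 c, mx W c r N y ^ p ≠ ⊤ := by
  have hle : ∫⁻ y in cell c r 0 c, mx W c r N y ^ p ≤
      ∫⁻ y in cell c r 0 c, ((2 ^ n) ^ N * avg W c r 0 c) ^ p := by
    refine setLIntegral_mono' (measurableSet_cell 0 c) fun y hy => ?_
    gcongr
    rw [← avg_eq_of_mem hy]
    exact mx_le hr N y
  refine ne_top_of_le_ne_top ?_ hle
  rw [setLIntegral_const]
  exact ENNReal.mul_ne_top (ENNReal.rpow_ne_top_of_nonneg hp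
    (ENNReal.mul_ne_top (by simp) (avg_ne_top hr hW 0 c))) (volume_cell_ne_top hr 0 c)

/-- If `∫_P h ≤ A ∫_P W` for each dyadic cell `P` of generation at most `N` on which the running
maximum of the averages of `W` is attained at `P` itself, then `∫_Q h (M_N W)^ε` is controlled by
`∫_Q (M_N W)^(1+ε)` with a constant proportional to `ε`. -/
lemma lintegral_telescope (hr : 0 < r) (hW : ∀ a s, ∫⁻ y in closedBall a s, W y ≠ ⊤)
    {ε : ℝ} (hε : 0 ≤ ε) (hε1 : ε ≤ 1) {A : ℝ≥0∞} (hA : A ≠ ⊤) (h : (Fin n → ℝ) → ℝ≥0∞) (N : ℕ)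
    (hN : ∀ k ≤ N, ∀ x, avg W c r k x = mx W c r k x →
      ∫⁻ y in cell c r k x, h y ≤ A * ∫⁻ y in cell c r k x, W y) :
    ∫⁻ y in cell c r 0 c, h y * mx W c r N y ^ ε ≤
      A * (avg W c r 0 c ^ (1 + ε) * volume (cell c r 0 c)) +
        ENNReal.ofReal (2 ^ n * ε) * A * ∫⁻ y in cell c r 0 c, mx W c r N y ^ (1 + ε) := by
  have h1e : 0 ≤ 1 + ε := by linarith
  have hB : ENNReal.ofReal (2 ^ n * ε) * A ≠ ⊤ := ENNReal.mul_ne_top ENNReal.ofReal_ne_top hA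
  have hind : ∀ k ≤ N, ∫⁻ y in cell c r 0 c, h y * mx W c r k y ^ ε ≤
      A * (avg W c r 0 c ^ (1 + ε) * volume (cell c r 0 c)) +
        ENNReal.ofReal (2 ^ n * ε) * A * ∫⁻ y in cell c r 0 c, mx W c r k y ^ (1 + ε) := by
    intro k
    induction k with
    | zero =>
      intro _
      refine le_add_right ?_
      rw [lintegral_mul_mx hr hW hε h le_rfl, mx_zero]
      have h0 := hN 0 (Nat.zero_le N) c (mx_zero c).symm
      rw [lintegral_cell_eq (W := W) hr] at h0
      rw [ENNReal.rpow_add_of_nonneg 1 ε zero_le_one hε, ENNReal.rpow_one]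
      calc _ ≤ A * (avg W c r 0 c * volume (cell c r 0 c)) * avg W c r 0 c ^ ε := by gcongr
        _ = _ := by ring
    | succ k ih =>
      intro hk
      have hs := lintegral_step hr hW hε hε1 hA h k (hN (k + 1) hk)
      rw [lintegral_const_mul' _ _ hB, lintegral_const_mul' _ _ hB] at hs
      have hfin := ENNReal.mul_ne_top hB (lintegral_mx_ne_top (c := c) hr hW h1e k)
      refine (ENNReal.add_le_add_iff_right hfin).1 (hs.trans ?_)
      refine (add_le_add_left (ih (by omega)) _).trans (le_of_eq ?_)
      ring
  exact hind N le_rfl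

/-- On a cell where the running maximum is attained, the truncated dyadic maximal function is
dominated by the maximal function of the weight localized to the closure of that cell, because
only later generations contribute. -/
lemma mx_le_maxOp (hr : 0 < r) {k N : ℕ} {x y : Fin n → ℝ}
    (hx : avg W c r k x = mx W c r k x) (hy : y ∈ cell c r k x) :
    mx W c r N y ≤
      maxOp n ((closedBall (ctr c r k x) (side r k / 2)).indicator W) y := by
  have hge : ∀ j, k ≤ j → avg W c r j y ≤
      maxOp n ((closedBall (ctr c r k x) (side r k / 2)).indicator W) y := by
    intro j hj
    have hs := side_pos hr j
    have hsub : cell c r j y ⊆ closedBall (ctr c r k x) (side r k / 2) := by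
      refine (cell_anti hr hj y).trans ?_
      rw [cell_eq_of_mem hy]
      exact cell_subset_closedBall hr k x
    have h1 : avg W c r j y =
        (volume (closedBall (ctr c r j y) (side r j / 2)))⁻¹ *
          ∫⁻ z in closedBall (ctr c r j y) (side r j / 2),
            (closedBall (ctr c r k x) (side r k / 2)).indicator W z := by
      rw [← avg_eq_closedBall hr, avg, avg]
      congr 1
      refine setLIntegral_congr_fun (measurableSet_cell j y) fun z hz => ?_
      rw [indicator_of_mem (hsub hz)]
    rw [h1, maxOp]
    exact le_iSup₂_of_le (ctr c r j y) (side r j / 2) (le_iSup₂_of_le (by positivity)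
      (cell_subset_closedBall hr j y (mem_cell_self j y)) le_rfl)
  refine partialSups_le (fun j => avg W c r j y) N _ fun j _ => ?_
  rcases le_total k j with hkj | hjk
  · exact hge j hkj
  · calc avg W c r j y ≤ mx W c r k y := avg_le_mx hjk y
      _ = avg W c r k y := by rw [mx_eq_of_mem hr hy, ← hx, avg_eq_of_mem hy]
      _ ≤ _ := hge k le_rfl

/-- The reverse Hölder estimate at generation `N`, uniformly in `N`. -/
lemma lintegral_mul_mx_le (hr : 0 < r) (hW : ∀ a s, ∫⁻ y in closedBall a s, W y ≠ ⊤)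
    {ε : ℝ} (hε : 0 ≤ ε) (hε1 : ε ≤ 1) {A : ℝ≥0∞} (hA : A ≠ ⊤)
    (hAW : ∀ a s, 0 < s → ∫⁻ x in closedBall a s, maxOp n ((closedBall a s).indicator W) x ≤
      A * ∫⁻ x in closedBall a s, W x)
    (hεA : ENNReal.ofReal (2 ^ n * ε) * A ≤ 2⁻¹) (N : ℕ) :
    ∫⁻ y in cell c r 0 c, W y * mx W c r N y ^ ε ≤
      2 * (avg W c r 0 c ^ (1 + ε) * volume (cell c r 0 c)) := by
  have h1e : 0 ≤ 1 + ε := by linarith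
  have hW1 := lintegral_telescope (c := c) hr hW hε hε1 ENNReal.one_ne_top W N
    (fun k _ x _ => by rw [one_mul])
  have hM1 := lintegral_telescope (c := c) hr hW hε hε1 hA (mx W c r N) N (fun k _ x hx => by
    have hs := side_pos hr k
    calc ∫⁻ y in cell c r k x, mx W c r N y
        ≤ ∫⁻ y in cell c r k x,
            maxOp n ((closedBall (ctr c r k x) (side r k / 2)).indicator W) y :=
          setLIntegral_mono' (measurableSet_cell k x) fun y hy => mx_le_maxOp hr hx hy
      _ ≤ ∫⁻ y in closedBall (ctr c r k x) (side r k / 2),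
            maxOp n ((closedBall (ctr c r k x) (side r k / 2)).indicator W) y :=
          lintegral_mono_set (cell_subset_closedBall hr k x)
      _ ≤ A * ∫⁻ y in closedBall (ctr c r k x) (side r k / 2), W y := hAW _ _ (by positivity)
      _ = A * ∫⁻ y in cell c r k x, W y := by rw [lintegral_cell_eq_closedBall hr])
  have hX := lintegral_mx_ne_top (c := c) hr hW h1e N
  have hpow : ∀ y, mx W c r N y * mx W c r N y ^ ε = mx W c r N y ^ (1 + ε) := fun y => by
    rw [ENNReal.rpow_add_of_nonneg 1 ε zero_le_one hε, ENNReal.rpow_one]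
  simp only [hpow] at hM1
  set X := ∫⁻ y in cell c r 0 c, mx W c r N y ^ (1 + ε)
  set V := avg W c r 0 c ^ (1 + ε) * volume (cell c r 0 c)
  have hX2 : 2⁻¹ * X ≤ A * V := by
    have hfin : 2⁻¹ * X ≠ ⊤ := ENNReal.mul_ne_top (by simp) hX
    refine (ENNReal.add_le_add_iff_right hfin).1 ?_
    calc 2⁻¹ * X + 2⁻¹ * X = X := by rw [← add_mul, ENNReal.inv_two_add_inv_two, one_mul]
      _ ≤ A * V + ENNReal.ofReal (2 ^ n * ε) * A * X := hM1
      _ ≤ _ := by gcongr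
  have hX3 : X ≤ 2 * (A * V) := by
    calc X = 2 * (2⁻¹ * X) := by
          rw [← mul_assoc, ENNReal.mul_inv_cancel (by simp) (by simp), one_mul]
      _ ≤ _ := by gcongr
  calc ∫⁻ y in cell c r 0 c, W y * mx W c r N y ^ ε
      ≤ 1 * V + ENNReal.ofReal (2 ^ n * ε) * 1 * X := hW1
    _ ≤ 1 * V + ENNReal.ofReal (2 ^ n * ε) * 1 * (2 * (A * V)) := by gcongr
    _ = 1 * V + 2 * (ENNReal.ofReal (2 ^ n * ε) * A) * V := by ring
    _ ≤ 1 * V + 2 * 2⁻¹ * V := by gcongr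
    _ = 2 * V := by rw [ENNReal.mul_inv_cancel (by simp) (by simp)]; ring

end Telescoping

/-! ### Passage to the limit -/

section Limit

variable {n : ℕ} {c : Fin n → ℝ} {r : ℝ} {w : (Fin n → ℝ) → ℝ}

lemma lintegral_closedBall_ne_top (hw : LocallyIntegrable w volume) (a : Fin n → ℝ) (s : ℝ) :
    ∫⁻ y in closedBall a s, ENNReal.ofReal (w y) ≠ ⊤ :=
  (hw.integrableOn_isCompact (isCompact_closedBall a s)).lintegral_lt_top.ne

/-- Lebesgue differentiation along the dyadic cells. -/
lemma ae_tendsto_avg (hr : 0 < r) (hw0 : ∀ x, 0 ≤ w x) (hw : LocallyIntegrable w volume) :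
    ∀ᵐ x, Tendsto (fun k => avg (fun y => ENNReal.ofReal (w y)) c r k x) atTop
      (nhds (ENNReal.ofReal (w x))) := by
  have hside : Tendsto (fun k => side r k / 2) atTop (nhdsWithin 0 (Ioi 0)) := by
    refine tendsto_nhdsWithin_iff.2 ⟨?_, Eventually.of_forall fun k => ?_⟩
    · have h := (tendsto_pow_atTop_nhds_zero_of_lt_one (r := (1 / 2 : ℝ)) (by norm_num)
        (by norm_num)).const_mul r
      rw [mul_zero] at h
      refine h.congr fun k => ?_
      unfold side
      rw [one_div, inv_pow]
      field_simp
    · have := side_pos hr k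
      simpa using this
  filter_upwards [IsUnifLocDoublingMeasure.ae_tendsto_average volume hw 1] with x hx
  have h := hx (fun k => ctr c r k x) (fun k => side r k / 2) hside
    (Eventually.of_forall fun k => by
      rw [one_mul]; exact cell_subset_closedBall hr k x (mem_cell_self k x))
  refine ((ENNReal.continuous_ofReal.tendsto _).comp h).congr fun k => ?_
  have hs := side_pos hr k
  rw [Function.comp_apply, ofReal_setAverage
    (hw.integrableOn_isCompact (isCompact_closedBall _ _)) (Eventually.of_forall hw0),
    avg_eq_closedBall hr, ENNReal.div_eq_inv_mul]

/-- Fatou's lemma turns the estimate at finite generations into the bound for `W^(1+ε)`. -/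
lemma lintegral_rpow_le (hr : 0 < r) (hw0 : ∀ x, 0 ≤ w x) (hw : LocallyIntegrable w volume)
    {ε : ℝ} (hε : 0 ≤ ε) {C : ℝ≥0∞}
    (hC : ∀ N, ∫⁻ y in cell c r 0 c, ENNReal.ofReal (w y) *
      mx (fun y => ENNReal.ofReal (w y)) c r N y ^ ε ≤ C) :
    ∫⁻ y in cell c r 0 c, ENNReal.ofReal (w y) ^ (1 + ε) ≤ C := by
  set W : (Fin n → ℝ) → ℝ≥0∞ := fun y => ENNReal.ofReal (w y) with hWdef
  have hmeas : AEMeasurable W volume := hw.aestronglyMeasurable.aemeasurable.ennreal_ofReal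
  calc ∫⁻ y in cell c r 0 c, W y ^ (1 + ε)
      = ∫⁻ y in cell c r 0 c, liminf (fun N => W y * avg W c r N y ^ ε) atTop := by
        refine lintegral_congr_ae (ae_restrict_of_ae ?_)
        filter_upwards [ae_tendsto_avg (c := c) hr hw0 hw] with y hy
        have h1 : Tendsto (fun N => W y * avg W c r N y ^ ε) atTop (nhds (W y * W y ^ ε)) :=
          ENNReal.Tendsto.const_mul ((ENNReal.continuous_rpow_const.tendsto _).comp hy)
            (Or.inr ENNReal.ofReal_ne_top)
        rw [h1.liminf_eq, ENNReal.rpow_add_of_nonneg 1 ε zero_le_one hε, ENNReal.rpow_one]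
    _ ≤ liminf (fun N => ∫⁻ y in cell c r 0 c, W y * avg W c r N y ^ ε) atTop :=
        lintegral_liminf_le' fun N =>
          hmeas.restrict.mul ((measurable_avg N).pow_const ε).aemeasurable
    _ ≤ liminf (fun _ : ℕ => C) atTop := by
        refine liminf_le_liminf (Eventually.of_forall fun N => ?_)
        refine le_trans (lintegral_mono fun y => ?_) (hC N)
        gcongr
        exact avg_le_mx le_rfl y
    _ = C := liminf_const C

end Limit

lemma lintegral_maxOp_le {n : ℕ} {w : (Fin n → ℝ) → ℝ} (hw : LocallyIntegrable w volume)
    (hA : ainftyConst n w ≠ ⊤) (a : Fin n → ℝ) {s : ℝ} (hs : 0 < s) :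
    ∫⁻ x in closedBall a s, maxOp n ((closedBall a s).indicator fun y => ENNReal.ofReal (w y)) x ≤
      ainftyConst n w * ∫⁻ x in closedBall a s, ENNReal.ofReal (w x) := by
  rw [← ENNReal.div_le_iff_le_mul (Or.inr hA) (Or.inl (lintegral_closedBall_ne_top hw a s))]
  exact le_iSup_of_le a (le_iSup₂_of_le s hs le_rfl)

/-- `1 ≤ [w]_{A_∞}` as soon as some cube has positive `w`-mass, since `M(χ_Q w)` is at least the
average of `w` over `Q` at each point of `Q`. -/
lemma one_le_ainftyConst {n : ℕ} {w : (Fin n → ℝ) → ℝ} (hw : LocallyIntegrable w volume)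
    (a : Fin n → ℝ) {s : ℝ} (hs : 0 < s)
    (h0 : ∫⁻ x in closedBall a s, ENNReal.ofReal (w x) ≠ 0) : 1 ≤ ainftyConst n w := by
  have hfin := lintegral_closedBall_ne_top hw a s
  have hle : ∫⁻ x in closedBall a s, ENNReal.ofReal (w x) ≤ ∫⁻ x in closedBall a s,
      maxOp n ((closedBall a s).indicator fun y => ENNReal.ofReal (w y)) x := by
    calc ∫⁻ x in closedBall a s, ENNReal.ofReal (w x)
        = ∫⁻ _ in closedBall a s, (volume (closedBall a s))⁻¹ *
            ∫⁻ y in closedBall a s, ENNReal.ofReal (w y) := by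
          rw [setLIntegral_const, mul_right_comm, ENNReal.inv_mul_cancel
            (measure_closedBall_pos volume a hs).ne' measure_closedBall_lt_top.ne, one_mul]
      _ ≤ _ := by
          refine setLIntegral_mono' measurableSet_closedBall fun x hx => ?_
          refine le_iSup₂_of_le a s (le_iSup₂_of_le hs hx (le_of_eq ?_))
          rw [setLIntegral_indicator measurableSet_closedBall, inter_self]
  calc (1 : ℝ≥0∞) = (∫⁻ x in closedBall a s, ENNReal.ofReal (w x)) /
        ∫⁻ x in closedBall a s, ENNReal.ofReal (w x) := (ENNReal.div_self h0 hfin).symm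
    _ ≤ _ := by gcongr
    _ ≤ _ := le_iSup_of_le a (le_iSup₂_of_le s hs le_rfl)

/-- **Sharp reverse Hölder inequality for `A_∞` weights.** There is `cₙ > 0` such that
every weight with `[w]_{A_∞} < ∞` satisfies, with `δ = 1/(cₙ [w]_{A_∞})`,
`(⨍_Q w^(1+δ))^(1/(1+δ)) ≤ (2ⁿ+1) ⨍_Q w` for every cube `Q`. -/
theorem statement6 (n : ℕ) (hn : 1 ≤ n) :
    ∃ cn > (0 : ℝ),
      ∀ (w : (Fin n → ℝ) → ℝ), (∀ x, 0 ≤ w x) → LocallyIntegrable w volume →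
        ainftyConst n w < ⊤ →
        ∀ δ : ℝ, δ = 1 / (cn * (ainftyConst n w).toReal) →
          ∀ (c : Fin n → ℝ) (r : ℝ), 0 < r →
            ((volume (closedBall c r))⁻¹ *
                ∫⁻ x in closedBall c r, ENNReal.ofReal (w x) ^ (1 + δ)) ^ (1 / (1 + δ)) ≤
              ((2 : ℝ≥0∞) ^ n + 1) *
                ((volume (closedBall c r))⁻¹ *
                  ∫⁻ x in closedBall c r, ENNReal.ofReal (w x)) := by
  -- the factor `2 ^ n` is the volume ratio of consecutive dyadic cells, and the further factor
  -- `2` makes the term to be absorbed at most half of the left-hand side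
  refine ⟨2 * 2 ^ n, by positivity, ?_⟩
  intro w hw0 hw hA δ hδ c r hr
  have hδ0 : 0 ≤ δ := by rw [hδ]; positivity
  have h1δ : 0 < 1 + δ := by linarith
  by_cases hz : ∫⁻ x in closedBall c r, ENNReal.ofReal (w x) = 0
  · have hmeas : AEMeasurable (fun x => ENNReal.ofReal (w x)) (volume.restrict (closedBall c r)) :=
      hw.aestronglyMeasurable.aemeasurable.ennreal_ofReal.restrict
    have hz' : ∫⁻ x in closedBall c r, ENNReal.ofReal (w x) ^ (1 + δ) = 0 := by
      rw [lintegral_eq_zero_iff' hmeas] at hz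
      rw [lintegral_eq_zero_iff' (hmeas.pow_const _)]
      filter_upwards [hz] with x hx
      simp only [Pi.zero_apply] at hx ⊢
      rw [hx, ENNReal.zero_rpow_of_pos h1δ]
    rw [hz', mul_zero, ENNReal.zero_rpow_of_pos (by positivity)]
    exact zero_le
  have hA1 := one_le_ainftyConst hw c hr hz
  have hAr : 1 ≤ (ainftyConst n w).toReal := by
    have := ENNReal.toReal_mono hA.ne hA1
    simpa using this
  have h2n : (1 : ℝ) ≤ 2 ^ n := one_le_pow₀ (by norm_num)
  have hδ1 : δ ≤ 1 := by
    rw [hδ, div_le_one (by positivity)]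
    nlinarith
  have hδA : ENNReal.ofReal (2 ^ n * δ) * ainftyConst n w ≤ 2⁻¹ := by
    have h1 : 2 ^ n * δ * (ainftyConst n w).toReal = 2⁻¹ := by
      rw [hδ]
      field_simp
    rw [← ENNReal.ofReal_toReal hA.ne, ← ENNReal.ofReal_mul (by positivity),
      h1, ENNReal.ofReal_inv_of_pos (by norm_num)]
    simp
  have hmain := lintegral_rpow_le (c := c) hr hw0 hw hδ0 fun N =>
    lintegral_mul_mx_le (c := c) hr (lintegral_closedBall_ne_top hw) hδ0 hδ1 hA.ne
      (fun a s hs => lintegral_maxOp_le hw hA.ne a hs) hδA N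
  have hV0 := volume_cell_ne_zero (c := c) hr 0 c
  have hVt := volume_cell_ne_top (c := c) hr 0 c
  rw [← measure_congr (cell_zero_ae_eq (c := c) hr),
    ← setLIntegral_congr (cell_zero_ae_eq (c := c) hr),
    ← setLIntegral_congr (cell_zero_ae_eq (c := c) hr)]
  change _ ≤ _ * avg (fun x => ENNReal.ofReal (w x)) c r 0 c
  set a := avg (fun x => ENNReal.ofReal (w x)) c r 0 c
  have hle : (volume (cell c r 0 c))⁻¹ *
      ∫⁻ x in cell c r 0 c, ENNReal.ofReal (w x) ^ (1 + δ) ≤ (2 * a) ^ (1 + δ) := by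
    calc _ ≤ (volume (cell c r 0 c))⁻¹ * (2 * (a ^ (1 + δ) * volume (cell c r 0 c))) := by gcongr
      _ = ((volume (cell c r 0 c))⁻¹ * volume (cell c r 0 c)) * (2 * a ^ (1 + δ)) := by ring
      _ = 2 * a ^ (1 + δ) := by rw [ENNReal.inv_mul_cancel hV0 hVt, one_mul]
      _ ≤ 2 ^ (1 + δ) * a ^ (1 + δ) := by
          gcongr
          calc (2 : ℝ≥0∞) = 2 ^ (1 : ℝ) := (ENNReal.rpow_one 2).symm
            _ ≤ 2 ^ (1 + δ) := ENNReal.rpow_le_rpow_of_exponent_le (by norm_num) (by linarith)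
      _ = _ := (ENNReal.mul_rpow_of_nonneg _ _ h1δ.le).symm
  calc _ ≤ ((2 * a) ^ (1 + δ)) ^ (1 / (1 + δ)) := ENNReal.rpow_le_rpow hle (by positivity)
    _ = 2 * a := by rw [← ENNReal.rpow_mul, mul_one_div_cancel h1δ.ne', ENNReal.rpow_one]
    _ ≤ (2 ^ n + 1) * a := by
        gcongr
        have h1 : (1 : ℝ≥0∞) ≤ 2 ^ n := one_le_pow₀ (by norm_num)
        calc (2 : ℝ≥0∞) = 1 + 1 := one_add_one_eq_two.symm
          _ ≤ 2 ^ n + 1 := by gcongr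

end
end

section
/- Let $n \ge 1$ and $1 < p < q < \infty$, and let $w$ be a weight on $\mathbb{R}^n$ satisfying the $C_q$ condition with constant $2$ and exponent $\varepsilon \in (0, 1/2)$. Let $f$ be a bounded, compactly supported measurable function, not a.e. zero. For each integer $k$, let $\mathcal{W}(k)$ be a Whitney decomposition of $\Omega_k = \{x : Mf(x) > 2^k\}$, i.e., a countable family of pairwise disjoint cubes whose union is $\Omega_k$ and such that $5 \le \operatorname{dist}(Q, \mathbb{R}^n \setminus \Omega_k)/\operatorname{diam}(Q) \le 15$ for each $Q \in \mathcal{W}(k)$. Define $M_{p,q}(Mf)(x)^p = \sum_{k \in \mathbb{Z}} \sum_{Q \in \mathcal{W}(k)} 2^{kp} (M\chi_Q(x))^q$. Then there is a constant $c_n > 0$ depending only on $n$ such that $\int_{\mathbb{R}^n} (M_{p,q} Mf)^p \, w \le c_n \, 2^{c_n \frac{pq}{q-p}} \, \frac{1}{\varepsilon} \log\frac{1}{\varepsilon} \int_{\mathbb{R}^n} (Mf)^p \, w$. -/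
/-!
Write `w` for the weight, `Ω_k = {M f > 2^k}` and
`S k = 2^{kp} ∑_{Q ∈ W(k)} ∫ (M χ_Q)^q w`, so that the left-hand side of the theorem is `∑ₖ S k`.
The core of the proof is a contractive recursion
`S k ≤ ½ S (k - N) + D 2^{(k - N)p} w(Ω_{k-N})`
for suitable `N` and `D`.

To obtain it, group the cubes `Q ∈ W(k)` according to the cube `P ∈ W(k-N)` containing the centre of
`Q`; by the Whitney condition `Q ⊆ 5P` (`whitney_nested`). A local weak-type bound (`local_weak`)
shows that the cubes attached to `P` have total volume at most a constant times `2^{-N} |P|`.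

* Outside `8P` one has `M χ_Q ≲ (|Q| / |P|) M χ_P`, and `∑ a_i^q ≤ (∑ a_i)^q` gives a contribution at
  most `(C 2^{-N})^q ∫ (M χ_P)^q w` (`far_sum`). The factor `2^{-Nq}` beats the loss `2^{Np}` in the
  recursion once `N` is of order `κ = q / (q - p)`.
* Inside `8P`, which is covered by cubes `P' ∈ W(k-N)` of comparable or larger size, the dyadic
  decomposition of the kernel gives `∫_{P'} (M χ_Q)^q w ≲ κ ∫_Q M (χ_{P'} w)` (`kernel_near`). The
  cubes `Q` are disjoint and lie in a fixed dilate of `P'`, so it remains to bound the integral of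
  `M (χ_{P'} w)` over that dilate. Its dyadic level sets are estimated by the weak-type inequality
  for the first `L` scales and by the `C_q` condition on `P'` for the others (`llogl`), which yields
  `≲ L w(P') + (2^{-Lε} / ε) ∫ (M χ_{P'})^q w`. The last coefficient is absorbed when `L` is of order
  `(pq / (q - p)) (1/ε) log (1/ε)`; this is where the factor `(1/ε) log (1/ε)` comes from.

The recursion can be summed over `k` because `S` is bounded near `-∞`: at low levels `Ω_k` is
contained in one cube on which the average of `|f|` is comparable to `2^k` (`apriori_bound`). This
bound enters only qualitatively. Finally `∑ₖ 2^{kp} w(Ω_k) ≤ 2 ∫ (M f)^p w`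
(`tsum_level_integral_le`).
-/

open MeasureTheory ENNReal Metric Set Filter

noncomputable section

/-- Euclidean distance on `Fin n → ℝ` (the ambient sup metric is used for cubes). -/
def eucDist {n : ℕ} (x y : Fin n → ℝ) : ℝ := Real.sqrt (∑ i, (x i - y i) ^ 2)

/-- Euclidean diameter of a set. -/
def eucDiam {n : ℕ} (s : Set (Fin n → ℝ)) : ℝ :=
  sSup {d | ∃ a ∈ s, ∃ b ∈ s, d = eucDist a b}

/-- Euclidean distance between two sets. -/
def eucSetDist {n : ℕ} (s t : Set (Fin n → ℝ)) : ℝ :=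
  sInf {d | ∃ a ∈ s, ∃ b ∈ t, d = eucDist a b}

/-- Half-open axis-parallel cube with center `c` and side length `2r`
(half-open so that pairwise disjoint cubes can tile an open set). -/
def hCube {n : ℕ} (c : Fin n → ℝ) (r : ℝ) : Set (Fin n → ℝ) :=
  {x | ∀ i, c i - r ≤ x i ∧ x i < c i + r}

/-- The Hardy–Littlewood maximal function of a real-valued function. -/
def mAbs (n : ℕ) (f : (Fin n → ℝ) → ℝ) : (Fin n → ℝ) → ℝ≥0∞ :=
  maxOp n fun y => ENNReal.ofReal |f y|

/-! ### Cubes and the maximal operator -/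

lemma vol_cb {n : ℕ} (c : Fin n → ℝ) {r : ℝ} (hr : 0 ≤ r) :
    volume (closedBall c r) = ENNReal.ofReal ((2 * r) ^ n) := by
  rw [Real.volume_pi_closedBall c hr, Fintype.card_fin]

lemma vol_cb_pos {n : ℕ} (c : Fin n → ℝ) {r : ℝ} (hr : 0 < r) :
    volume (closedBall c r) ≠ 0 := by
  rw [vol_cb c hr.le]
  simp only [ne_eq, ENNReal.ofReal_eq_zero, not_le]; positivity

lemma vol_cb_top {n : ℕ} (c : Fin n → ℝ) (r : ℝ) :
    volume (closedBall c r) ≠ ∞ := measure_closedBall_lt_top.ne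

lemma vol_cb_mul {n : ℕ} (c c' : Fin n → ℝ) {r s : ℝ} (hr : 0 ≤ r) (hs : 0 ≤ s) :
    volume (closedBall c' (s * r)) = ENNReal.ofReal (s ^ n) * volume (closedBall c r) := by
  rw [vol_cb c hr, vol_cb c' (by positivity), ← ENNReal.ofReal_mul (by positivity)]
  congr 1; rw [← mul_pow]; congr 1; ring

lemma hCube_eq {n : ℕ} (c : Fin n → ℝ) (r : ℝ) :
    hCube c r = Set.pi univ fun i => Ico (c i - r) (c i + r) := by
  ext x; simp [hCube, Set.mem_pi]

lemma measurableSet_hCube {n : ℕ} (c : Fin n → ℝ) (r : ℝ) : MeasurableSet (hCube c r) := by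
  rw [hCube_eq]; exact MeasurableSet.univ_pi fun i => measurableSet_Ico

lemma hCube_subset {n : ℕ} (c : Fin n → ℝ) {r : ℝ} (hr : 0 ≤ r) :
    hCube c r ⊆ closedBall c r := by
  intro x hx
  rw [mem_closedBall, dist_pi_le_iff hr]
  intro i
  rw [Real.dist_eq, abs_le]
  constructor <;> linarith [(hx i).1, (hx i).2]

lemma center_mem_hCube {n : ℕ} (c : Fin n → ℝ) {r : ℝ} (hr : 0 < r) : c ∈ hCube c r := by
  intro i; constructor <;> linarith

lemma vol_hCube {n : ℕ} (c : Fin n → ℝ) {r : ℝ} (hr : 0 ≤ r) :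
    volume (hCube c r) = volume (closedBall c r) := by
  rw [vol_cb c hr, hCube_eq, Real.volume_pi_Ico]
  have : ∀ i, c i + r - (c i - r) = 2 * r := fun i => by ring
  simp only [this, Finset.prod_const, Finset.card_univ, Fintype.card_fin]
  rw [ENNReal.ofReal_pow (by positivity)]

lemma hCube_ae_eq {n : ℕ} (c : Fin n → ℝ) {r : ℝ} (hr : 0 ≤ r) :
    hCube c r =ᵐ[volume] closedBall c r :=
  ae_eq_of_subset_of_measure_ge (hCube_subset c hr) (vol_hCube c hr).ge
    (measurableSet_hCube c r).nullMeasurableSet (vol_cb_top c r)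

lemma setLIntegral_le_maxOp {n : ℕ} (f : (Fin n → ℝ) → ℝ≥0∞) {c x : Fin n → ℝ} {r : ℝ}
    (hr : 0 < r) (hx : x ∈ closedBall c r) :
    ∫⁻ y in closedBall c r, f y ≤ volume (closedBall c r) * maxOp n f x := by
  have h : (volume (closedBall c r))⁻¹ * ∫⁻ y in closedBall c r, f y ≤ maxOp n f x :=
    le_iSup_of_le c (le_iSup_of_le r (le_iSup_of_le hr (le_iSup_of_le hx le_rfl)))
  calc ∫⁻ y in closedBall c r, f y
      = volume (closedBall c r) * ((volume (closedBall c r))⁻¹ * ∫⁻ y in closedBall c r, f y) := by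
        rw [← mul_assoc, ENNReal.mul_inv_cancel (vol_cb_pos c hr) (vol_cb_top c r), one_mul]
    _ ≤ _ := by gcongr

lemma maxOp_le {n : ℕ} {f : (Fin n → ℝ) → ℝ≥0∞} {x : Fin n → ℝ} {A : ℝ≥0∞}
    (h : ∀ c r, 0 < r → x ∈ closedBall c r →
      ∫⁻ y in closedBall c r, f y ≤ volume (closedBall c r) * A) : maxOp n f x ≤ A := by
  refine iSup_le fun c => iSup_le fun r => iSup_le fun hr => iSup_le fun hx => ?_
  calc (volume (closedBall c r))⁻¹ * ∫⁻ y in closedBall c r, f y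
      ≤ (volume (closedBall c r))⁻¹ * (volume (closedBall c r) * A) := by gcongr; exact h c r hr hx
    _ = A := by
        rw [← mul_assoc, ENNReal.inv_mul_cancel (vol_cb_pos c hr) (vol_cb_top c r), one_mul]

lemma exists_of_lt_maxOp {n : ℕ} {f : (Fin n → ℝ) → ℝ≥0∞} {x : Fin n → ℝ} {t : ℝ≥0∞}
    (h : t < maxOp n f x) : ∃ c r, 0 < r ∧ x ∈ closedBall c r ∧
      t * volume (closedBall c r) < ∫⁻ y in closedBall c r, f y := by
  by_contra! hcon
  refine absurd h (not_lt.2 (maxOp_le fun c r hr hx => ?_))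
  rw [mul_comm]; exact hcon c r hr hx

lemma lt_maxOp_of {n : ℕ} {f : (Fin n → ℝ) → ℝ≥0∞} {c x : Fin n → ℝ} {t : ℝ≥0∞} {r : ℝ}
    (hr : 0 < r) (hx : x ∈ closedBall c r)
    (h : t * volume (closedBall c r) < ∫⁻ y in closedBall c r, f y) : t < maxOp n f x := by
  by_contra! hcon
  refine absurd (setLIntegral_le_maxOp f hr hx) (not_le.2 (lt_of_le_of_lt ?_ h))
  rw [mul_comm]; gcongr

/-- `maxOp n f` is lower semicontinuous: a cube witnessing `t < Mf(x)` can be enlarged slightly. -/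
lemma isOpen_lt_maxOp {n : ℕ} (f : (Fin n → ℝ) → ℝ≥0∞) (t : ℝ≥0∞) :
    IsOpen {x | t < maxOp n f x} := by
  rw [Metric.isOpen_iff]
  intro x hx
  obtain ⟨c, r, hr, hxc, hlt⟩ := exists_of_lt_maxOp hx
  have hcont : Tendsto (fun δ : ℝ => t * ENNReal.ofReal ((2 * (r + δ)) ^ n)) (nhds 0)
      (nhds (t * ENNReal.ofReal ((2 * (r + 0)) ^ n))) := by
    refine ENNReal.Tendsto.const_mul ?_ (Or.inl ?_)
    · refine (ENNReal.continuous_ofReal.tendsto _).comp ?_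
      exact (Continuous.tendsto (by fun_prop) 0)
    · simp only [ne_eq, ENNReal.ofReal_eq_zero, not_le]; positivity
  rw [add_zero, ← vol_cb c hr.le] at hcont
  have hev := (hcont.eventually_lt_const hlt)
  obtain ⟨δ, hδ, hδ0⟩ := ((hev.filter_mono nhdsWithin_le_nhds).and
    (self_mem_nhdsWithin : ∀ᶠ δ in nhdsWithin (0 : ℝ) (Ioi 0), δ ∈ Ioi 0)).exists
  have hδ0 : 0 < δ := hδ0
  refine ⟨δ, hδ0, fun y hy => ?_⟩
  refine lt_maxOp_of (c := c) (r := r + δ) (by positivity) ?_ ?_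
  · rw [mem_closedBall] at hxc ⊢
    rw [mem_ball] at hy
    linarith [dist_triangle y x c]
  · rw [vol_cb c (by positivity)]
    exact hδ.trans_le (lintegral_mono_set (closedBall_subset_closedBall (by linarith)))

lemma measurable_maxOp {n : ℕ} (f : (Fin n → ℝ) → ℝ≥0∞) : Measurable (maxOp n f) :=
  measurable_of_Ioi fun t => (isOpen_lt_maxOp f t).measurableSet

lemma maxOp_congr_ae {n : ℕ} {f g : (Fin n → ℝ) → ℝ≥0∞} (h : f =ᵐ[volume] g) :
    maxOp n f = maxOp n g := by
  ext x
  have : ∀ c r, ∫⁻ y in closedBall c r, f y = ∫⁻ y in closedBall c r, g y :=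
    fun c r => lintegral_congr_ae (ae_restrict_of_ae h)
  simp only [maxOp, this]

lemma maxOp_chi_le_one {n : ℕ} (Q : Set (Fin n → ℝ)) (x : Fin n → ℝ) :
    maxOp n (chi n Q) x ≤ 1 := by
  refine maxOp_le fun c r hr hx => ?_
  calc ∫⁻ y in closedBall c r, chi n Q y ≤ ∫⁻ y in closedBall c r, 1 := by
        refine lintegral_mono fun y => ?_
        exact Set.indicator_le_self' (fun _ _ => zero_le) y |>.trans le_rfl
    _ = _ := by simp

lemma maxOp_chi_mono {n : ℕ} {Q Q' : Set (Fin n → ℝ)} (h : Q ⊆ Q') (x : Fin n → ℝ) :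
    maxOp n (chi n Q) x ≤ maxOp n (chi n Q') x := by
  refine maxOp_le fun c r hr hx => le_trans ?_ (setLIntegral_le_maxOp _ hr hx)
  exact lintegral_mono fun y => Set.indicator_le_indicator_of_subset h (fun _ => zero_le) y

/-- If every point of `Q` is at distance at least `D` from `x`, a cube through `x` meeting `Q` has
side at least `D`. -/
lemma maxOp_chi_le_far {n : ℕ} {Q : Set (Fin n → ℝ)} {x : Fin n → ℝ} {D : ℝ} (hD : 0 < D)
    (h : ∀ y ∈ Q, D ≤ dist x y) :
    maxOp n (chi n Q) x ≤ (ENNReal.ofReal (D ^ n))⁻¹ * volume Q := by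
  refine maxOp_le fun c r hr hx => ?_
  by_cases hQ : (Q ∩ closedBall c r).Nonempty
  · obtain ⟨y, hyQ, hyc⟩ := hQ
    have h2 : D ≤ 2 * r := by
      have := dist_triangle_right x y c
      rw [mem_closedBall] at hx hyc
      linarith [h y hyQ]
    have hD0 : ENNReal.ofReal (D ^ n) ≠ 0 := by
      simp only [ne_eq, ENNReal.ofReal_eq_zero, not_le]; positivity
    calc ∫⁻ y in closedBall c r, chi n Q y ≤ ∫⁻ y, chi n Q y := setLIntegral_le_lintegral _ _
      _ ≤ ∫⁻ y in Q, 1 := lintegral_indicator_le _ _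
      _ = volume Q := by simp
      _ = ENNReal.ofReal (D ^ n) * ((ENNReal.ofReal (D ^ n))⁻¹ * volume Q) := by
          rw [← mul_assoc, ENNReal.mul_inv_cancel hD0 ENNReal.ofReal_ne_top, one_mul]
      _ ≤ _ := by rw [vol_cb c hr.le]; gcongr
  · have : ∫⁻ y in closedBall c r, chi n Q y = 0 := by
      rw [setLIntegral_congr_fun (g := fun _ => 0) measurableSet_closedBall]
      · simp
      · intro y hy
        have : y ∉ Q := fun hyQ => hQ ⟨y, hyQ, hy⟩
        simp [chi, this]
    rw [this]; exact zero_le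

/-- Lower bound for `M h` in terms of the mass of `h` in a cube, at every point. -/
lemma maxOp_lower {n : ℕ} {h : (Fin n → ℝ) → ℝ≥0∞} {c x : Fin n → ℝ} {r ρ : ℝ} (hr : 0 < r)
    (hrρ : r ≤ ρ) (hx : dist x c ≤ ρ) :
    ∫⁻ y in closedBall c r, h y ≤ ENNReal.ofReal ((2 * ρ) ^ n) * maxOp n h x := by
  rw [← vol_cb c (hr.le.trans hrρ)]
  exact (lintegral_mono_set (closedBall_subset_closedBall hrρ)).trans
    (setLIntegral_le_maxOp h (hr.trans_le hrρ) hx)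

lemma setLIntegral_chi {n : ℕ} {Q : Set (Fin n → ℝ)} (hQ : MeasurableSet Q)
    (s : Set (Fin n → ℝ)) (hs : Q ⊆ s) : ∫⁻ y in s, chi n Q y = volume Q := by
  rw [chi, lintegral_indicator_one hQ, Measure.restrict_apply hQ, inter_eq_left.2 hs]

lemma maxOp_chi_eq_one {n : ℕ} {c x : Fin n → ℝ} {r : ℝ} (hr : 0 < r)
    (hx : x ∈ closedBall c r) : maxOp n (chi n (closedBall c r)) x = 1 := by
  refine le_antisymm (maxOp_chi_le_one _ _) ?_
  have := setLIntegral_le_maxOp (chi n (closedBall c r)) hr hx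
  rw [setLIntegral_chi measurableSet_closedBall _ le_rfl] at this
  by_contra! hlt
  refine absurd this (not_le.2 ?_)
  calc _ < volume (closedBall c r) * 1 :=
        ENNReal.mul_lt_mul_right (vol_cb_pos c hr) (vol_cb_top c r) hlt
    _ = _ := mul_one _

/-! ### Weak-type estimates -/

/-- The weak-type `(1,1)` inequality, by the Vitali covering lemma. -/
lemma weak_type {n : ℕ} (hn : 1 ≤ n) (h : (Fin n → ℝ) → ℝ≥0∞) {t : ℝ≥0∞} (ht : t ≠ 0) :
    t * volume {x | t < maxOp n h x} ≤ 5 ^ n * ∫⁻ y, h y := by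
  rcases eq_or_ne t ∞ with rfl | htop
  · simp
  rcases eq_or_ne (∫⁻ y, h y) ∞ with hI | hI
  · rw [hI, ENNReal.mul_top (by positivity)]; exact le_top
  set S : Set ((Fin n → ℝ) × ℝ) :=
    {b | 0 < b.2 ∧ t * volume (closedBall b.1 b.2) < ∫⁻ y in closedBall b.1 b.2, h y} with hS
  -- Radii of witnessing cubes are bounded because `h` has finite mass.
  have hR : ∃ R : ℝ, ∀ b ∈ S, b.2 ≤ R := by
    refine ⟨max 1 ((∫⁻ y, h y) / t).toReal, fun b hb => ?_⟩
    by_contra! hlt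
    have h1 : 1 < b.2 := (le_max_left _ _).trans_lt hlt
    have h2 : ((∫⁻ y, h y) / t).toReal < b.2 := (le_max_right _ _).trans_lt hlt
    have h3 : t * volume (closedBall b.1 b.2) < ∫⁻ y, h y :=
      hb.2.trans_le (setLIntegral_le_lintegral _ _)
    have h4 : volume (closedBall b.1 b.2) ≤ (∫⁻ y, h y) / t := by
      rw [ENNReal.le_div_iff_mul_le (Or.inl ht) (Or.inl htop), mul_comm]; exact h3.le
    rw [vol_cb _ hb.1.le] at h4
    have h5 : (2 * b.2) ^ n ≤ ((∫⁻ y, h y) / t).toReal :=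
      (ENNReal.ofReal_le_iff_le_toReal (ENNReal.div_ne_top hI ht)).1 h4
    have h6 : (2 * b.2) ≤ (2 * b.2) ^ n := le_self_pow₀ (by linarith) (by omega)
    linarith
  obtain ⟨R, hR⟩ := hR
  obtain ⟨u, huS, hdisj, hcov⟩ := Vitali.exists_disjoint_subfamily_covering_enlargement_closedBall
    S (fun b => b.1) (fun b => b.2) R hR 5 (by norm_num)
  have hcount : u.Countable := by
    refine hdisj.countable_of_nonempty_interior fun b hb => ?_
    exact (nonempty_ball.2 (huS hb).1).mono ball_subset_interior_closedBall
  have : Countable u := hcount.to_subtype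
  have hsub : {x | t < maxOp n h x} ⊆ ⋃ b : u, closedBall b.1.1 (5 * b.1.2) := by
    intro x hx
    obtain ⟨c, r, hr, hxc, hlt⟩ := exists_of_lt_maxOp hx
    obtain ⟨b, hb, hsub⟩ := hcov (c, r) ⟨hr, hlt⟩
    exact mem_iUnion.2 ⟨⟨b, hb⟩, hsub hxc⟩
  calc t * volume {x | t < maxOp n h x}
      ≤ t * ∑' b : u, volume (closedBall b.1.1 (5 * b.1.2)) := by
        gcongr; exact (measure_mono hsub).trans (measure_iUnion_le _)
    _ = ∑' b : u, 5 ^ n * (t * volume (closedBall b.1.1 b.1.2)) := by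
        rw [← ENNReal.tsum_mul_left]
        congr 1; ext b
        rw [vol_cb_mul b.1.1 b.1.1 (huS b.2).1.le (by norm_num), ENNReal.ofReal_pow (by norm_num)]
        rw [show ENNReal.ofReal 5 = 5 by norm_num]; ring
    _ ≤ ∑' b : u, 5 ^ n * ∫⁻ y in closedBall b.1.1 b.1.2, h y := by
        gcongr with b; exact (huS b.2).2.le
    _ = 5 ^ n * ∫⁻ y in ⋃ b : u, closedBall b.1.1 b.1.2, h y := by
        rw [ENNReal.tsum_mul_left, lintegral_iUnion (fun b => measurableSet_closedBall)]
        intro a b hab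
        exact hdisj a.2 b.2 (fun h => hab (Subtype.ext h))
    _ ≤ 5 ^ n * ∫⁻ y, h y := by gcongr; exact Measure.restrict_le_self

/-- Only the part of `g` above height `t / 2` contributes to `{M g > t}`. -/
lemma weak_type_trunc {n : ℕ} (hn : 1 ≤ n) {g : (Fin n → ℝ) → ℝ≥0∞} (hg : Measurable g)
    {t : ℝ≥0∞} (ht : t ≠ 0) :
    t * volume {x | t < maxOp n g x} ≤ 2 * 5 ^ n * ∫⁻ y in {y | t / 2 < g y}, g y := by
  have hm : MeasurableSet {y | t / 2 < g y} := measurableSet_lt measurable_const hg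
  have hsub : {x | t < maxOp n g x} ⊆
      {x | t / 2 < maxOp n ({y | t / 2 < g y}.indicator g) x} := by
    intro x hx
    by_contra hcon
    have hcon : maxOp n ({y | t / 2 < g y}.indicator g) x ≤ t / 2 := not_lt.1 fun h => hcon h
    refine absurd hx (not_lt.2 (maxOp_le fun c r hr hxc => ?_))
    calc ∫⁻ y in closedBall c r, g y
        ≤ ∫⁻ y in closedBall c r, ({y | t / 2 < g y}.indicator g y + t / 2) := by
          refine lintegral_mono fun y => ?_
          by_cases hy : t / 2 < g y
          · rw [indicator_of_mem (by exact hy)]; exact le_self_add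
          · rw [indicator_of_notMem (by exact hy), zero_add]; exact not_lt.1 hy
      _ = (∫⁻ y in closedBall c r, {y | t / 2 < g y}.indicator g y)
            + t / 2 * volume (closedBall c r) := by
          rw [lintegral_add_right _ measurable_const, setLIntegral_const]
      _ ≤ volume (closedBall c r) * (t / 2) + t / 2 * volume (closedBall c r) := by
          gcongr
          exact (setLIntegral_le_maxOp _ hr hxc).trans (by gcongr)
      _ = volume (closedBall c r) * t := by
          rw [mul_comm (t / 2), ← mul_add, ENNReal.add_halves]
  calc t * volume {x | t < maxOp n g x}
      ≤ t * volume {x | t / 2 < maxOp n ({y | t / 2 < g y}.indicator g) x} := by gcongr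
    _ = 2 * (t / 2 * volume {x | t / 2 < maxOp n ({y | t / 2 < g y}.indicator g) x}) := by
        rw [← mul_assoc, ENNReal.mul_div_cancel (by norm_num) (by norm_num)]
    _ ≤ 2 * (5 ^ n * ∫⁻ y, {y | t / 2 < g y}.indicator g y) := by
        exact mul_le_mul_right (weak_type hn _ (ENNReal.half_pos ht).ne') _
    _ = _ := by rw [lintegral_indicator hm, mul_assoc]

/-- Localised weak-type bound: if `M f ≤ α` somewhere near a cube, then `{M f > β}` occupies at
most a fraction `α / β` of it, up to a constant. -/
lemma local_weak {n : ℕ} (hn : 1 ≤ n) (f : (Fin n → ℝ) → ℝ≥0∞) {c z : Fin n → ℝ} {r K : ℝ}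
    (hr : 0 < r) (hK : 0 ≤ K) (hz : dist c z ≤ K * r) {α β : ℝ≥0∞} (hα : maxOp n f z ≤ α)
    (hβ : ENNReal.ofReal ((K + 6) ^ n) * α ≤ β) (hβ0 : β ≠ 0) :
    β * volume ({x | β < maxOp n f x} ∩ closedBall c (5 * r)) ≤
      ENNReal.ofReal ((5 * (7 + K)) ^ n) * α * volume (closedBall c r) := by
  have hsub : {x | β < maxOp n f x} ∩ closedBall c (5 * r) ⊆
      {x | β < maxOp n ((closedBall c (7 * r)).indicator f) x} := by
    rintro x ⟨hx, hxc⟩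
    obtain ⟨c', r', hr', hxc', hlt⟩ := exists_of_lt_maxOp hx
    rw [mem_closedBall] at hxc hxc'
    rcases le_or_gt r r' with hrr | hrr
    · exfalso
      have hzz : z ∈ closedBall c' ((K + 6) * r') := by
        rw [mem_closedBall]
        have h1 := dist_triangle z c c'
        have h2 := dist_triangle_left c c' x
        rw [dist_comm c z] at hz
        nlinarith
      have hlt2 := hlt.trans_le ((lintegral_mono_set (closedBall_subset_closedBall
        (show r' ≤ (K + 6) * r' by nlinarith))).trans
        (setLIntegral_le_maxOp f (by positivity) hzz))
      rw [vol_cb_mul c' c' hr'.le (by positivity)] at hlt2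
      refine absurd hlt2 (not_lt.2 ?_)
      calc _ ≤ ENNReal.ofReal ((K + 6) ^ n) * volume (closedBall c' r') * α := by gcongr
        _ = ENNReal.ofReal ((K + 6) ^ n) * α * volume (closedBall c' r') := by ring
        _ ≤ _ := by gcongr
    · refine lt_maxOp_of hr' hxc' (hlt.trans_le ?_)
      refine setLIntegral_mono_ae' measurableSet_closedBall (ae_of_all _ fun y hy => ?_)
      rw [indicator_of_mem]
      rw [mem_closedBall] at hy ⊢
      have h1 := dist_triangle y c' c
      have h2 := dist_triangle_left c' c x
      linarith
  calc β * volume ({x | β < maxOp n f x} ∩ closedBall c (5 * r))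
      ≤ β * volume {x | β < maxOp n ((closedBall c (7 * r)).indicator f) x} := by gcongr
    _ ≤ 5 ^ n * ∫⁻ y, (closedBall c (7 * r)).indicator f y := weak_type hn _ hβ0
    _ ≤ 5 ^ n * ∫⁻ y in closedBall c ((7 + K) * r), f y := by
        rw [lintegral_indicator measurableSet_closedBall]
        exact mul_le_mul_right (lintegral_mono_set (closedBall_subset_closedBall (by nlinarith))) _
    _ ≤ 5 ^ n * (volume (closedBall c ((7 + K) * r)) * α) := by
        gcongr
        refine (setLIntegral_le_maxOp f (x := z) (by positivity) ?_).trans (by gcongr)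
        rw [mem_closedBall, dist_comm]; nlinarith
    _ = _ := by
        rw [vol_cb_mul c c hr.le (by positivity), mul_pow,
          ENNReal.ofReal_mul (by positivity), ENNReal.ofReal_pow (by norm_num : (0:ℝ) ≤ 5)]
        rw [show ENNReal.ofReal 5 = 5 by norm_num]; ring

/-! ### The kernel `(M χ_Q)^s` -/

lemma geom_real {x : ℝ} (hx : 0 < x) (hx1 : x ≤ 1) : x / 2 ≤ 1 - (2 : ℝ) ^ (-x) := by
  have h := rpow_one_add_le_one_add_mul_self (s := -(1 / 2 : ℝ)) (by norm_num) hx.le hx1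
  rw [Real.rpow_neg (by norm_num), ← Real.inv_rpow (by norm_num)]
  norm_num at h ⊢
  linarith

/-- `∑ⱼ 2^{-jx} ≤ 2 / x`. -/
lemma tsum_two_rpow_neg_le {x : ℝ} (hx : 0 < x) (hx1 : x ≤ 1) :
    ∑' j : ℕ, ENNReal.ofReal ((2 : ℝ) ^ (-x)) ^ j ≤ ENNReal.ofReal (2 / x) := by
  have h := geom_real hx hx1
  rw [ENNReal.tsum_geometric, ← ENNReal.ofReal_one, ← ENNReal.ofReal_sub _ (by positivity),
    ← ENNReal.ofReal_inv_of_pos (by linarith [half_pos hx])]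
  refine ENNReal.ofReal_le_ofReal ?_
  rw [inv_le_comm₀ (by linarith [half_pos hx]) (by positivity), inv_div]
  exact h

/-- Dyadic decomposition of the kernel `(M χ_Q)^s`, integrated against `g`. -/
lemma kernel_near {n : ℕ} (hn : 1 ≤ n) {g : (Fin n → ℝ) → ℝ≥0∞} (hg : Measurable g)
    {c y : Fin n → ℝ} {r κ : ℝ} (hr : 0 < r) (hκ : 1 ≤ κ) (hy : y ∈ hCube c r) :
    ∫⁻ x, maxOp n (chi n (hCube c r)) x ^ (1 + 1 / κ) * g x ≤
      ENNReal.ofReal (32 ^ n * (2 * κ)) * (volume (hCube c r) * maxOp n g y) := by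
  have hκ0 : 0 < κ := by linarith
  have hκ1 : 1 / κ ≤ 1 := by rw [div_le_one hκ0]; exact hκ
  have hκ2 : 0 < 1 / κ := by positivity
  set B : ℕ → Set (Fin n → ℝ) := fun j => closedBall c (2 ^ (j + 1) * r) with hB
  have hpt : ∀ x, maxOp n (chi n (hCube c r)) x ^ (1 + 1 / κ) * g x ≤
      ∑' j : ℕ, ENNReal.ofReal (16 ^ n * ((1 / 2 : ℝ) ^ (j * n)) ^ (1 + 1 / κ)) *
        (B j).indicator g x := by
    intro x
    suffices h : ∃ j : ℕ, x ∈ B j ∧ maxOp n (chi n (hCube c r)) x ^ (1 + 1 / κ) ≤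
        ENNReal.ofReal (16 ^ n * ((1 / 2 : ℝ) ^ (j * n)) ^ (1 + 1 / κ)) by
      obtain ⟨j, hxj, hj⟩ := h
      refine le_trans ?_ (ENNReal.le_tsum j)
      rw [indicator_of_mem hxj]
      gcongr
    by_cases hx : dist x c ≤ 2 * r
    · refine ⟨0, by simpa [hB] using hx, ?_⟩
      calc _ ≤ (1 : ℝ≥0∞) ^ (1 + 1 / κ) := by gcongr; exact maxOp_chi_le_one _ _
        _ ≤ _ := by
          rw [ENNReal.one_rpow, ENNReal.one_le_ofReal]
          simp only [zero_mul, pow_zero, Real.one_rpow, mul_one]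
          exact one_le_pow₀ (by norm_num)
    · push Not at hx
      have h1 : 1 ≤ dist x c / (2 * r) := by rw [le_div_iff₀ (by positivity)]; linarith
      obtain ⟨j, hj1, hj2⟩ := exists_nat_pow_near h1 (by norm_num : (1 : ℝ) < 2)
      rw [le_div_iff₀ (by positivity)] at hj1
      rw [div_lt_iff₀ (by positivity)] at hj2
      refine ⟨j + 1, ?_, ?_⟩
      · rw [hB, mem_closedBall, pow_succ]; nlinarith
      have hfar := maxOp_chi_le_far (Q := hCube c r) (x := x) (D := 2 ^ j * r) (by positivity) (by
        intro z hz
        have hz' := hCube_subset c hr.le hz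
        rw [mem_closedBall] at hz'
        have := dist_triangle x z c
        have h2 : (1 : ℝ) ≤ 2 ^ j := one_le_pow₀ (by norm_num)
        nlinarith)
      have hval : (ENNReal.ofReal ((2 ^ j * r) ^ n))⁻¹ * volume (hCube c r) =
          ENNReal.ofReal (4 ^ n * (1 / 2 : ℝ) ^ ((j + 1) * n)) := by
        rw [vol_hCube c hr.le, vol_cb c hr.le, ← ENNReal.ofReal_inv_of_pos (by positivity),
          ← ENNReal.ofReal_mul (by positivity)]
        congr 1
        rw [pow_mul, ← inv_pow, ← mul_pow, ← mul_pow]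
        congr 1
        rw [pow_succ, one_div, inv_pow]
        field_simp
        norm_num
      rw [hval] at hfar
      calc _ ≤ (ENNReal.ofReal (4 ^ n * (1 / 2 : ℝ) ^ ((j + 1) * n))) ^ (1 + 1 / κ) := by gcongr
        _ = ENNReal.ofReal ((4 ^ n * (1 / 2 : ℝ) ^ ((j + 1) * n)) ^ (1 + 1 / κ)) :=
          ENNReal.ofReal_rpow_of_nonneg (by positivity) (by positivity)
        _ ≤ _ := by
          refine ENNReal.ofReal_le_ofReal ?_
          rw [Real.mul_rpow (by positivity) (by positivity)]
          gcongr
          calc ((4 : ℝ) ^ n) ^ (1 + 1 / κ) ≤ ((4 : ℝ) ^ n) ^ (2 : ℝ) :=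
                Real.rpow_le_rpow_of_exponent_le (one_le_pow₀ (by norm_num)) (by linarith)
            _ = 16 ^ n := by
                rw [Real.rpow_two, ← pow_mul, mul_comm, pow_mul]; norm_num
  have hterm : ∀ j : ℕ, ENNReal.ofReal (16 ^ n * ((1 / 2 : ℝ) ^ (j * n)) ^ (1 + 1 / κ)) *
      ∫⁻ x in B j, g x ≤ ENNReal.ofReal (32 ^ n) * (volume (hCube c r) * maxOp n g y) *
        ENNReal.ofReal ((2 : ℝ) ^ (-(1 / κ))) ^ j := by
    intro j
    have hyB : y ∈ B j := by
      have hy' := hCube_subset c hr.le hy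
      refine closedBall_subset_closedBall ?_ hy'
      have h2 : (1 : ℝ) ≤ 2 ^ (j + 1) := one_le_pow₀ (by norm_num)
      nlinarith
    calc _ ≤ ENNReal.ofReal (16 ^ n * ((1 / 2 : ℝ) ^ (j * n)) ^ (1 + 1 / κ)) *
          (volume (B j) * maxOp n g y) := by
          gcongr; exact setLIntegral_le_maxOp g (by positivity) hyB
      _ = ENNReal.ofReal (16 ^ n * ((1 / 2 : ℝ) ^ (j * n)) ^ (1 + 1 / κ) * ((2 ^ (j + 1)) ^ n)) *
          (volume (hCube c r) * maxOp n g y) := by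
          rw [hB, vol_cb_mul c c hr.le (by positivity), vol_hCube c hr.le,
            ENNReal.ofReal_mul (by positivity) (q := (2 ^ (j + 1)) ^ n)]
          ring
      _ ≤ ENNReal.ofReal (32 ^ n * ((2 : ℝ) ^ (-(1 / κ))) ^ j) *
          (volume (hCube c r) * maxOp n g y) := by
          gcongr ENNReal.ofReal ?_ * _
          have e1 : ((1 / 2 : ℝ) ^ (j * n)) ^ (1 + 1 / κ) =
              (1 / 2 : ℝ) ^ (j * n) * ((1 / 2 : ℝ) ^ (j * n)) ^ (1 / κ) := by
            rw [Real.rpow_add (by positivity), Real.rpow_one]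
          have e2 : ((1 / 2 : ℝ) ^ (j * n)) ^ (1 / κ) ≤ ((2 : ℝ) ^ (-(1 / κ))) ^ j := by
            calc _ ≤ ((1 / 2 : ℝ) ^ j) ^ (1 / κ) := by
                  gcongr ?_ ^ _
                  exact pow_le_pow_of_le_one (by norm_num) (by norm_num)
                    (Nat.le_mul_of_pos_right _ (by omega))
              _ = _ := by
                  rw [← Real.rpow_natCast, ← Real.rpow_natCast, ← Real.rpow_mul (by norm_num),
                    ← Real.rpow_mul (by norm_num), one_div 2, Real.inv_rpow (by norm_num),
                    ← Real.rpow_neg (by norm_num)]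
                  congr 1; ring
          have e3 : (16 : ℝ) ^ n * (1 / 2 : ℝ) ^ (j * n) * ((2 ^ (j + 1)) ^ n) = 32 ^ n := by
            rw [pow_mul, ← mul_pow, ← mul_pow]; congr 1
            rw [pow_succ, one_div, inv_pow]; field_simp; norm_num
          rw [e1]
          calc _ = (16 : ℝ) ^ n * (1 / 2 : ℝ) ^ (j * n) * ((2 ^ (j + 1)) ^ n) *
                ((1 / 2 : ℝ) ^ (j * n)) ^ (1 / κ) := by ring
            _ ≤ _ := by rw [e3]; gcongr
      _ = _ := by
          rw [ENNReal.ofReal_mul (by positivity), ENNReal.ofReal_pow (by positivity)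
            (p := (2 : ℝ) ^ (-(1 / κ)))]
          ring
  calc _ ≤ ∫⁻ x, ∑' j : ℕ, ENNReal.ofReal (16 ^ n * ((1 / 2 : ℝ) ^ (j * n)) ^ (1 + 1 / κ)) *
        (B j).indicator g x := lintegral_mono hpt
    _ = ∑' j : ℕ, ENNReal.ofReal (16 ^ n * ((1 / 2 : ℝ) ^ (j * n)) ^ (1 + 1 / κ)) *
        ∫⁻ x in B j, g x := by
        rw [lintegral_tsum fun j =>
          ((hg.indicator measurableSet_closedBall).const_mul _).aemeasurable]
        congr 1; ext j
        rw [lintegral_const_mul _ (hg.indicator measurableSet_closedBall),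
          lintegral_indicator measurableSet_closedBall]
    _ ≤ ∑' j : ℕ, ENNReal.ofReal (32 ^ n) * (volume (hCube c r) * maxOp n g y) *
        ENNReal.ofReal ((2 : ℝ) ^ (-(1 / κ))) ^ j := by exact ENNReal.tsum_le_tsum hterm
    _ ≤ ENNReal.ofReal (32 ^ n) * (volume (hCube c r) * maxOp n g y) *
        ENNReal.ofReal (2 / (1 / κ)) := by
        rw [ENNReal.tsum_mul_left]; gcongr; exact tsum_two_rpow_neg_le hκ2 hκ1
    _ = _ := by
        rw [ENNReal.ofReal_mul (by positivity), div_div_eq_mul_div, div_one]; ring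

/-! ### A logarithmic estimate from the `C_q` condition -/

/-- Layer-cake bound with the dyadic heights `2^i T`. -/
lemma dyadic_le (X T : ℝ≥0∞) (hT : T ≠ 0) :
    X ≤ T + ∑' i : ℕ, if 2 ^ i * T < X then 2 ^ i * T else 0 := by
  have key : ∀ m : ℕ, min X (2 ^ m * T) ≤
      T + ∑ i ∈ Finset.range m, if 2 ^ i * T < X then 2 ^ i * T else 0 := by
    intro m
    induction m with
    | zero => simp
    | succ m ih =>
      rw [Finset.sum_range_succ, ← add_assoc]
      by_cases h : 2 ^ m * T < X
      · rw [min_eq_right h.le] at ih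
        rw [if_pos h]
        calc min X (2 ^ (m + 1) * T) ≤ 2 ^ (m + 1) * T := min_le_right _ _
          _ = 2 ^ m * T + 2 ^ m * T := by rw [pow_succ]; ring
          _ ≤ _ := by gcongr
      · rw [if_neg h, add_zero]
        rw [min_eq_left (not_lt.1 h)] at ih
        exact (min_le_left _ _).trans ih
  by_contra! hlt
  set F := T + ∑' i : ℕ, if 2 ^ i * T < X then 2 ^ i * T else 0
  have hF : F ≠ ∞ := (hlt.trans_le le_top).ne
  obtain ⟨m, hm⟩ := ENNReal.exists_nat_gt (ENNReal.div_ne_top hF hT)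
  have h2 : F < 2 ^ m * T := by
    have hTt : T ≠ ∞ := ne_top_of_le_ne_top hF le_self_add
    rw [ENNReal.div_lt_iff (Or.inl hT) (Or.inl hTt)] at hm
    refine hm.trans_le ?_
    gcongr
    exact_mod_cast (Nat.lt_two_pow_self).le
  refine absurd (key m) (not_le.2 ?_)
  refine lt_of_le_of_lt ?_ (lt_min hlt h2)
  exact add_le_add_right (ENNReal.sum_le_tsum _) _

/-- For every `L`, the `C_q`-type hypothesis `hC` on a cube `B` bounds `∫_G M(χ_B w)` by about
`L w(B)`, up to a multiple of the tail `a` that decays exponentially in `L`. The level sets `{M(χ_B w) > 2^i w(B)/|B|}` with `i < L` are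
handled by the weak-type bound and those with `i ≥ L` by the `C_q` condition. -/
lemma llogl {n : ℕ} (hn : 1 ≤ n) {v : (Fin n → ℝ) → ℝ≥0∞} (hv : Measurable v)
    {c : Fin n → ℝ} {r : ℝ} (hr : 0 < r) (hfin : ∫⁻ x in closedBall c r, v x ≠ ∞)
    {a : ℝ≥0∞} {ε : ℝ} (hε : 0 < ε) (hε1 : ε ≤ 1)
    (hC : ∀ E ⊆ closedBall c r, MeasurableSet E →
      ∫⁻ x in E, v x ≤ 2 * (volume E / volume (closedBall c r)) ^ ε * a)
    {G : Set (Fin n → ℝ)} {Λ : ℝ≥0∞}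
    (hGΛ : volume G ≤ Λ * volume (closedBall c r)) (L : ℕ) :
    ∫⁻ x in G, maxOp n ((closedBall c r).indicator v) x ≤
      (Λ + 2 * 5 ^ n * L) * (∫⁻ x in closedBall c r, v x) +
        16 * 5 ^ n * ENNReal.ofReal (2 ^ (-(L * ε)) / ε) * a := by
  set B := closedBall c r with hB
  set g := B.indicator v with hg
  have hgm : Measurable g := hv.indicator measurableSet_closedBall
  have hVpos : volume B ≠ 0 := vol_cb_pos c hr
  have hVtop : volume B ≠ ∞ := vol_cb_top c r
  have hgint : ∫⁻ x, g x = ∫⁻ x in B, v x := lintegral_indicator measurableSet_closedBall _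
  set I := ∫⁻ x in B, v x with hI
  rcases eq_or_ne I 0 with hI0 | hI0
  · have hg0 : g =ᵐ[volume] 0 := (lintegral_eq_zero_iff hgm).1 (hgint.trans hI0)
    have : ∀ x, maxOp n g x = 0 := by
      intro x
      rw [maxOp_congr_ae hg0]
      exact le_antisymm (maxOp_le fun c r _ _ => by simp) zero_le
    simp [this]
  set T := I / volume B with hT
  have hT0 : T ≠ 0 := (ENNReal.div_pos hI0 hVtop).ne'
  have hTtop : T ≠ ∞ := ENNReal.div_ne_top hfin hVpos
  have hTV : T * volume B = I := ENNReal.div_mul_cancel hVpos hVtop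
  have hlev : ∀ i : ℕ, MeasurableSet {x | 2 ^ i * T < maxOp n g x} := fun i =>
    (isOpen_lt_maxOp g _).measurableSet
  have hwt : ∀ i : ℕ, 2 ^ i * T * volume {x | 2 ^ i * T < maxOp n g x} ≤
      2 * 5 ^ n * ∫⁻ y in {y | 2 ^ i * T / 2 < g y}, g y := fun i =>
    weak_type_trunc hn hgm (by positivity)
  have hsmall : ∀ i : ℕ, 2 ^ i * T * volume {x | 2 ^ i * T < maxOp n g x} ≤ 2 * 5 ^ n * I :=
    fun i => (hwt i).trans (by rw [← hgint]; gcongr; exact Measure.restrict_le_self)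
  have hlarge : ∀ i : ℕ, 2 ^ i * T * volume {x | 2 ^ i * T < maxOp n g x} ≤
      8 * 5 ^ n * a * ENNReal.ofReal ((2 : ℝ) ^ (-ε)) ^ i := by
    intro i
    set E := {y | 2 ^ i * T / 2 < g y} with hE
    have hEm : MeasurableSet E := measurableSet_lt measurable_const hgm
    have hEB : E ⊆ B := by
      intro y hy
      by_contra hyB
      have : (2 : ℝ≥0∞) ^ i * T / 2 < g y := hy
      rw [hg, indicator_of_notMem hyB] at this
      exact absurd this (not_lt.2 zero_le)
    have hEv : ∫⁻ y in E, g y = ∫⁻ y in E, v y :=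
      setLIntegral_congr_fun hEm fun y hy => indicator_of_mem (hEB hy) v
    -- Chebyshev: `|E| ≤ 2^{1-i} |B|`.
    have hcheb : volume E / volume B ≤ 2 * ENNReal.ofReal ((2 : ℝ)⁻¹ ^ i) := by
      have h1 : 2 ^ i * T / 2 * volume E ≤ I := by
        rw [← hgint]
        refine le_trans ?_ (mul_meas_ge_le_lintegral hgm (2 ^ i * T / 2))
        gcongr
        intro y hy
        have hy : 2 ^ i * T / 2 < g y := hy
        exact hy.le
      rw [ENNReal.div_le_iff hVpos hVtop]
      have h2 : 2 ^ i * T / 2 ≠ 0 := (ENNReal.half_pos (by positivity)).ne'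
      have h3 : 2 ^ i * T / 2 ≠ ∞ := by finiteness
      refine (ENNReal.mul_le_mul_iff_right h2 h3).1 (h1.trans (le_of_eq ?_))
      rw [← hTV, ENNReal.ofReal_pow (by norm_num), ENNReal.ofReal_inv_of_pos (by norm_num),
        show ENNReal.ofReal 2 = 2 by norm_num]
      calc T * volume B = (2 * 2⁻¹) ^ i * ((2 : ℝ≥0∞)⁻¹ * 2) * (T * volume B) := by
            rw [ENNReal.mul_inv_cancel (by norm_num) (by norm_num),
              ENNReal.inv_mul_cancel (by norm_num) (by norm_num)]; simp
        _ = _ := by rw [mul_pow, div_eq_mul_inv]; ring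
    calc _ ≤ 2 * 5 ^ n * ∫⁻ y in E, g y := hwt i
      _ ≤ 2 * 5 ^ n * (2 * (volume E / volume B) ^ ε * a) := by
          rw [hEv]; gcongr; exact hC E hEB hEm
      _ ≤ 2 * 5 ^ n * (2 * (2 * ENNReal.ofReal ((2 : ℝ) ^ (-ε)) ^ i) * a) := by
          gcongr
          calc (volume E / volume B) ^ ε ≤ (2 * ENNReal.ofReal ((2 : ℝ)⁻¹ ^ i)) ^ ε := by gcongr
            _ = 2 ^ ε * ENNReal.ofReal ((2 : ℝ) ^ (-ε)) ^ i := by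
                rw [ENNReal.mul_rpow_of_nonneg _ _ hε.le,
                  ENNReal.ofReal_rpow_of_nonneg (by positivity) hε.le,
                  ← ENNReal.ofReal_pow (by positivity), Real.rpow_neg (by norm_num),
                  ← Real.inv_rpow (by norm_num), ← Real.rpow_natCast, ← Real.rpow_natCast,
                  ← Real.rpow_mul (by norm_num), ← Real.rpow_mul (by norm_num), mul_comm ε]
            _ ≤ 2 ^ (1 : ℝ) * ENNReal.ofReal ((2 : ℝ) ^ (-ε)) ^ i := by
                gcongr; norm_num
            _ = _ := by rw [ENNReal.rpow_one]
      _ = _ := by ring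
  calc ∫⁻ x in G, maxOp n g x
      ≤ ∫⁻ x in G, (T + ∑' i : ℕ, {x | 2 ^ i * T < maxOp n g x}.indicator
          (fun _ => 2 ^ i * T) x) := by
        refine lintegral_mono fun x => (dyadic_le (maxOp n g x) T hT0).trans (le_of_eq ?_)
        simp only [indicator_apply]; rfl
    _ = T * volume G + ∑' i : ℕ, ∫⁻ x in G, {x | 2 ^ i * T < maxOp n g x}.indicator
          (fun _ => 2 ^ i * T) x := by
        rw [lintegral_add_left measurable_const, setLIntegral_const,
          lintegral_tsum fun i => (measurable_const.indicator (hlev i)).aemeasurable]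
    _ ≤ T * volume G + ∑' i : ℕ, 2 ^ i * T * volume {x | 2 ^ i * T < maxOp n g x} := by
        gcongr with i
        exact (setLIntegral_le_lintegral _ _).trans (lintegral_indicator_const_le _ _)
    _ = T * volume G + ((∑ i ∈ Finset.range L, 2 ^ i * T * volume {x | 2 ^ i * T < maxOp n g x}) +
          ∑' i : ℕ, 2 ^ (i + L) * T * volume {x | 2 ^ (i + L) * T < maxOp n g x}) := by
        rw [(ENNReal.summable.sum_add_tsum_nat_add' (k := L))]
    _ ≤ T * (Λ * volume B) + ((∑ i ∈ Finset.range L, 2 * 5 ^ n * I) +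
          ∑' i : ℕ, 8 * 5 ^ n * a * ENNReal.ofReal ((2 : ℝ) ^ (-ε)) ^ (i + L)) := by
        refine add_le_add (mul_le_mul_right hGΛ _) (add_le_add ?_ ?_)
        · exact Finset.sum_le_sum fun i _ => hsmall i
        · exact ENNReal.tsum_le_tsum fun i => hlarge (i + L)
    _ ≤ Λ * I + (L * (2 * 5 ^ n * I) + 8 * 5 ^ n * a *
          (ENNReal.ofReal (2 / ε) * ENNReal.ofReal ((2 : ℝ) ^ (-ε)) ^ L)) := by
        gcongr ?_ + (?_ + ?_)
        · rw [← hTV]; exact le_of_eq (by ring)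
        · simp
        · rw [ENNReal.tsum_mul_left]
          simp only [pow_add]
          rw [ENNReal.tsum_mul_right]
          gcongr
          exact tsum_two_rpow_neg_le hε hε1
    _ = _ := by
        have : ENNReal.ofReal (2 / ε) * ENNReal.ofReal ((2 : ℝ) ^ (-ε)) ^ L =
            2 * ENNReal.ofReal (2 ^ (-(L * ε)) / ε) := by
          rw [← ENNReal.ofReal_pow (by positivity), ← ENNReal.ofReal_mul (by positivity),
            ← Real.rpow_natCast, ← Real.rpow_mul (by norm_num),
            show (2 : ℝ≥0∞) = ENNReal.ofReal 2 by norm_num, ← ENNReal.ofReal_mul (by norm_num)]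
          congr 1
          rw [show -ε * (L : ℝ) = -(L * ε) by ring]; ring
        rw [this]; ring

/-! ### Local and far parts of the sum of tails -/

lemma measurable_tail {n : ℕ} {v : (Fin n → ℝ) → ℝ≥0∞} (hv : Measurable v) (q : ℝ)
    (Q : Set (Fin n → ℝ)) : Measurable fun x => maxOp n (chi n Q) x ^ q * v x :=
  ((measurable_maxOp _).pow_const q).mul hv

/-- The local estimate: disjoint cubes `Q i` contained in a fixed dilate of a cube `B`, with the
integrals of `(M χ_{Q i})^q` taken over `B` only. -/
lemma near_sum {n : ℕ} (hn : 1 ≤ n) {v : (Fin n → ℝ) → ℝ≥0∞} (hv : Measurable v)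
    {c : Fin n → ℝ} {r : ℝ} (hr : 0 < r) (hfin : ∫⁻ x in closedBall c r, v x ≠ ∞)
    {a : ℝ≥0∞} {ε : ℝ} (hε : 0 < ε) (hε1 : ε ≤ 1)
    (hC : ∀ E ⊆ closedBall c r, MeasurableSet E →
      ∫⁻ x in E, v x ≤ 2 * (volume E / volume (closedBall c r)) ^ ε * a)
    {q κ : ℝ} (hκ : 1 ≤ κ) (hq : 1 + 1 / κ ≤ q)
    {ι : Type*} [Countable ι] {cQ : ι → Fin n → ℝ} {rQ : ι → ℝ} (hrQ : ∀ i, 0 < rQ i)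
    (hdisj : Pairwise fun i j => Disjoint (hCube (cQ i) (rQ i)) (hCube (cQ j) (rQ j)))
    {K : ℝ} (hK : 0 ≤ K) (hsub : ∀ i, hCube (cQ i) (rQ i) ⊆ closedBall c (K * r)) (L : ℕ) :
    ∑' i, ∫⁻ x in closedBall c r, maxOp n (chi n (hCube (cQ i) (rQ i))) x ^ q * v x ≤
      ENNReal.ofReal (32 ^ n * (2 * κ)) *
        ((ENNReal.ofReal (K ^ n) + 2 * 5 ^ n * L) * (∫⁻ x in closedBall c r, v x) +
          16 * 5 ^ n * ENNReal.ofReal (2 ^ (-(L * ε)) / ε) * a) := by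
  set g := (closedBall c r).indicator v with hg
  have hgm : Measurable g := hv.indicator measurableSet_closedBall
  have h1 : ∀ i, ∫⁻ x in closedBall c r, maxOp n (chi n (hCube (cQ i) (rQ i))) x ^ q * v x ≤
      ENNReal.ofReal (32 ^ n * (2 * κ)) * ∫⁻ y in hCube (cQ i) (rQ i), maxOp n g y := by
    intro i
    set Q := hCube (cQ i) (rQ i) with hQ
    set A := ∫⁻ x, maxOp n (chi n Q) x ^ (1 + 1 / κ) * g x with hA
    have hle : ∫⁻ x in closedBall c r, maxOp n (chi n Q) x ^ q * v x ≤ A := by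
      rw [← lintegral_indicator measurableSet_closedBall]
      refine lintegral_mono fun x => ?_
      by_cases hx : x ∈ closedBall c r
      · rw [indicator_of_mem hx, hg, indicator_of_mem hx]
        gcongr ?_ * _
        exact ENNReal.rpow_le_rpow_of_exponent_ge (maxOp_chi_le_one _ _) hq
      · rw [indicator_of_notMem hx]; exact zero_le
    have hVpos : volume Q ≠ 0 := by
      rw [hQ, vol_hCube _ (hrQ i).le]; exact vol_cb_pos _ (hrQ i)
    have hVtop : volume Q ≠ ∞ := by rw [hQ, vol_hCube _ (hrQ i).le]; exact vol_cb_top _ _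
    -- Average the pointwise bound of `kernel_near` over the points of the cube
    have hav : volume Q * A ≤ volume Q *
        (ENNReal.ofReal (32 ^ n * (2 * κ)) * ∫⁻ y in Q, maxOp n g y) := by
      calc volume Q * A = ∫⁻ y in Q, A := by rw [setLIntegral_const, mul_comm]
        _ ≤ ∫⁻ y in Q, (ENNReal.ofReal (32 ^ n * (2 * κ)) * volume Q) * maxOp n g y := by
            refine setLIntegral_mono_ae' (measurableSet_hCube _ _) (ae_of_all _ fun y hy => ?_)
            rw [mul_assoc]
            exact kernel_near hn hgm (hrQ i) hκ hy
        _ = _ := by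
            rw [lintegral_const_mul _ (measurable_maxOp g)]; ring
    exact hle.trans ((ENNReal.mul_le_mul_iff_right hVpos hVtop).1 hav)
  calc _ ≤ ∑' i, ENNReal.ofReal (32 ^ n * (2 * κ)) *
        ∫⁻ y in hCube (cQ i) (rQ i), maxOp n g y := ENNReal.tsum_le_tsum h1
    _ = ENNReal.ofReal (32 ^ n * (2 * κ)) *
        ∫⁻ y in ⋃ i, hCube (cQ i) (rQ i), maxOp n g y := by
        rw [ENNReal.tsum_mul_left, lintegral_iUnion (fun i => measurableSet_hCube _ _) hdisj]
    _ ≤ _ := by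
        refine mul_le_mul_right (llogl hn hv hr hfin hε hε1 hC ?_ L) _
        rw [← vol_cb_mul c c hr.le hK]
        exact measure_mono (iUnion_subset hsub)

lemma tsum_rpow_le {ι : Type*} (f : ι → ℝ≥0∞) {q : ℝ} (hq : 1 ≤ q) :
    ∑' i, f i ^ q ≤ (∑' i, f i) ^ q := by
  have hsplit : ∀ x : ℝ≥0∞, x ^ q = x * x ^ (q - 1) := by
    intro x
    conv_lhs => rw [show q = 1 + (q - 1) by ring]
    rw [ENNReal.rpow_add_of_nonneg _ _ (by norm_num) (by linarith), ENNReal.rpow_one]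
  calc ∑' i, f i ^ q = ∑' i, f i * f i ^ (q - 1) := by simp only [hsplit]
    _ ≤ ∑' i, f i * (∑' i, f i) ^ (q - 1) := by
        refine ENNReal.tsum_le_tsum fun i => mul_le_mul_right ?_ _
        exact ENNReal.rpow_le_rpow (ENNReal.le_tsum i) (by linarith)
    _ = _ := by rw [ENNReal.tsum_mul_right, ← hsplit]

/-- For a set `Q ⊆ 5B` one has `M χ_Q ≲ (|Q| / |B|) M χ_B` outside `8B`. -/
lemma maxOp_chi_far_compare {n : ℕ} {Q : Set (Fin n → ℝ)} {c x : Fin n → ℝ} {r : ℝ} (hr : 0 < r)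
    (hQ : Q ⊆ closedBall c (5 * r)) (hx : x ∉ closedBall c (8 * r)) :
    maxOp n (chi n Q) x ≤
      6 ^ n * (volume Q / volume (closedBall c r)) * maxOp n (chi n (closedBall c r)) x := by
  rw [mem_closedBall, not_le] at hx
  set D := dist x c with hD
  have hD0 : 0 < D := by linarith
  have h1 := maxOp_chi_le_far (Q := Q) (x := x) (D := 2 * D / 6) (by positivity) (by
    intro y hy
    have hy' := hQ hy
    rw [mem_closedBall] at hy'
    have := dist_triangle x y c
    linarith)
  have h2 := maxOp_lower (h := chi n (closedBall c r)) (x := x) hr (by linarith : r ≤ D) le_rfl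
  rw [setLIntegral_chi measurableSet_closedBall _ le_rfl] at h2
  have hVpos : volume (closedBall c r) ≠ 0 := vol_cb_pos c hr
  have hVtop : volume (closedBall c r) ≠ ∞ := vol_cb_top c r
  have hp : ENNReal.ofReal ((2 * D) ^ n) ≠ 0 := by
    simp only [ne_eq, ENNReal.ofReal_eq_zero, not_le]; positivity
  have e : (ENNReal.ofReal ((2 * D / 6) ^ n))⁻¹ = 6 ^ n * (ENNReal.ofReal ((2 * D) ^ n))⁻¹ := by
    rw [div_pow, ENNReal.ofReal_div_of_pos (by positivity), ENNReal.inv_div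
      (Or.inl ENNReal.ofReal_ne_top) (Or.inl (by simp)), div_eq_mul_inv,
      ENNReal.ofReal_pow (by norm_num)]
    rw [show ENNReal.ofReal 6 = 6 by norm_num]
  calc _ ≤ _ := h1
    _ = 6 ^ n * (ENNReal.ofReal ((2 * D) ^ n))⁻¹ * volume Q *
        ((volume (closedBall c r))⁻¹ * volume (closedBall c r)) := by
        rw [ENNReal.inv_mul_cancel hVpos hVtop, mul_one, e]
    _ ≤ 6 ^ n * (ENNReal.ofReal ((2 * D) ^ n))⁻¹ * volume Q *
        ((volume (closedBall c r))⁻¹ * (ENNReal.ofReal ((2 * D) ^ n) *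
          maxOp n (chi n (closedBall c r)) x)) := by gcongr
    _ = 6 ^ n * ((ENNReal.ofReal ((2 * D) ^ n))⁻¹ * ENNReal.ofReal ((2 * D) ^ n)) *
        (volume Q * (volume (closedBall c r))⁻¹) * maxOp n (chi n (closedBall c r)) x := by ring
    _ = _ := by
        rw [ENNReal.inv_mul_cancel hp ENNReal.ofReal_ne_top, mul_one, div_eq_mul_inv]

/-- The tail estimate: away from `8B` the sum of the `(M χ_{Q i})^q` is dominated by
`δ^q (M χ_B)^q`, where `δ` bounds the proportion of `B` filled by the cubes. -/
lemma far_sum {n : ℕ} {v : (Fin n → ℝ) → ℝ≥0∞} (hv : Measurable v)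
    {c : Fin n → ℝ} {r : ℝ} (hr : 0 < r) {q : ℝ} (hq : 1 ≤ q)
    {ι : Type*} [Countable ι] {Q : ι → Set (Fin n → ℝ)}
    (hsub : ∀ i, Q i ⊆ closedBall c (5 * r)) {δ : ℝ≥0∞}
    (hδ : ∑' i, volume (Q i) ≤ δ * volume (closedBall c r)) :
    ∑' i, ∫⁻ x in (closedBall c (8 * r))ᶜ, maxOp n (chi n (Q i)) x ^ q * v x ≤
      (6 ^ n * δ) ^ q * ∫⁻ x, maxOp n (chi n (closedBall c r)) x ^ q * v x := by
  have hVpos : volume (closedBall c r) ≠ 0 := vol_cb_pos c hr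
  have hVtop : volume (closedBall c r) ≠ ∞ := vol_cb_top c r
  rw [← lintegral_tsum fun i => (measurable_tail hv q (Q i)).aemeasurable,
    ← lintegral_const_mul _ (measurable_tail hv q _)]
  refine le_trans ?_ (setLIntegral_le_lintegral (closedBall c (8 * r))ᶜ _)
  refine setLIntegral_mono_ae' measurableSet_closedBall.compl (ae_of_all _ fun x hx => ?_)
  rw [ENNReal.tsum_mul_right, ← mul_assoc, ← ENNReal.mul_rpow_of_nonneg _ _ (by linarith)]
  gcongr
  refine (tsum_rpow_le _ hq).trans ?_
  gcongr
  calc ∑' i, maxOp n (chi n (Q i)) x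
      ≤ ∑' i, 6 ^ n * (volume (Q i) / volume (closedBall c r)) *
          maxOp n (chi n (closedBall c r)) x :=
        ENNReal.tsum_le_tsum fun i => maxOp_chi_far_compare hr (hsub i) hx
    _ = 6 ^ n * ((∑' i, volume (Q i)) / volume (closedBall c r)) *
          maxOp n (chi n (closedBall c r)) x := by
        simp only [div_eq_mul_inv]
        rw [ENNReal.tsum_mul_right, ENNReal.tsum_mul_left, ENNReal.tsum_mul_right]
    _ ≤ _ := by
        gcongr
        rw [ENNReal.div_le_iff hVpos hVtop]; exact hδ

/-! ### Recursion for families of cubes -/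

/-- The tail `∫ (M χ_Q)^q v` for an extended-valued weight `v`. -/
def tail (n : ℕ) (q : ℝ) (v : (Fin n → ℝ) → ℝ≥0∞) (Q : Set (Fin n → ℝ)) : ℝ≥0∞ :=
  ∫⁻ x, maxOp n (chi n Q) x ^ q * v x

/-- The `C_q` condition with constant `2` and exponent `ε`, for an extended-valued weight `v`. -/
def CqCond (n : ℕ) (q ε : ℝ) (v : (Fin n → ℝ) → ℝ≥0∞) : Prop :=
  ∀ (c : Fin n → ℝ) (r : ℝ), 0 < r → ∀ E ⊆ closedBall c r, MeasurableSet E →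
    ∫⁻ x in E, v x ≤ 2 * (volume E / volume (closedBall c r)) ^ ε * tail n q v (closedBall c r)

lemma tail_hCube {n : ℕ} (q : ℝ) (v : (Fin n → ℝ) → ℝ≥0∞) (c : Fin n → ℝ) {r : ℝ} (hr : 0 ≤ r) :
    tail n q v (hCube c r) = tail n q v (closedBall c r) := by
  have : chi n (hCube c r) =ᵐ[volume] chi n (closedBall c r) :=
    indicator_ae_eq_of_ae_eq_set (hCube_ae_eq c hr)
  simp only [tail, maxOp_congr_ae this]

/-- One step of the recursion: a family of disjoint cubes `Q i`, organised by a coarser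
family of disjoint cubes `P j` through a relation `R`. The part of the integral outside `8P` is
estimated by `far_sum`; the part inside is redistributed among the cubes `P j'` meeting `8P`, each of
which is treated with `near_sum`. Using the `C_q` condition on `P j'` itself rather than on a dilate
avoids a constant growing exponentially in `q`. -/
lemma recursion_step {n : ℕ} (hn : 1 ≤ n) {v : (Fin n → ℝ) → ℝ≥0∞} (hv : Measurable v)
    (hfin : ∀ c r, ∫⁻ x in closedBall c r, v x ≠ ∞)
    {ε : ℝ} (hε : 0 < ε) (hε1 : ε ≤ 1) {q κ : ℝ} (hκ : 1 ≤ κ) (hq : 1 + 1 / κ ≤ q)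
    (hC : CqCond n q ε v)
    {ι J : Type*} [Countable ι] [Countable J] {cQ : ι → Fin n → ℝ} {rQ : ι → ℝ}
    {cP : J → Fin n → ℝ} {rP : J → ℝ} (hrQ : ∀ i, 0 < rQ i) (hrP : ∀ j, 0 < rP j)
    (hdQ : Pairwise fun i j => Disjoint (hCube (cQ i) (rQ i)) (hCube (cQ j) (rQ j)))
    (hdP : Pairwise fun i j => Disjoint (hCube (cP i) (rP i)) (hCube (cP j) (rP j)))
    (R : ι → J → Prop) (hR : ∀ i, ∃ j, R i j)
    (hsub : ∀ i j, R i j → hCube (cQ i) (rQ i) ⊆ closedBall (cP j) (5 * rP j))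
    {δ : ℝ≥0∞} (hδ : ∀ j, ∑' i : {i // R i j}, volume (hCube (cQ i) (rQ i)) ≤
      δ * volume (closedBall (cP j) (rP j)))
    (hcov : ∀ j, closedBall (cP j) (8 * rP j) ⊆ ⋃ j', hCube (cP j') (rP j'))
    {K : ℝ} (hK : 0 ≤ K)
    (hnear : ∀ i j j', R i j → (hCube (cP j') (rP j') ∩ closedBall (cP j) (8 * rP j)).Nonempty →
      hCube (cQ i) (rQ i) ⊆ closedBall (cP j') (K * rP j')) (L : ℕ) :
    ∑' i, tail n q v (hCube (cQ i) (rQ i)) ≤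
      ((6 ^ n * δ) ^ q + ENNReal.ofReal (32 ^ n * (2 * κ)) *
          (16 * 5 ^ n * ENNReal.ofReal (2 ^ (-(L * ε)) / ε))) *
        ∑' j, tail n q v (hCube (cP j) (rP j)) +
      ENNReal.ofReal (32 ^ n * (2 * κ)) * (ENNReal.ofReal (K ^ n) + 2 * 5 ^ n * L) *
        ∫⁻ x in ⋃ j, hCube (cP j) (rP j), v x := by
  classical
  have hq1 : 1 ≤ q := by
    have : 0 < 1 / κ := by positivity
    linarith
  set R' : ι → J → Prop := fun i j' =>
    ∃ j, R i j ∧ (hCube (cP j') (rP j') ∩ closedBall (cP j) (8 * rP j)).Nonempty with hR'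
  set F : ι → (Fin n → ℝ) → ℝ≥0∞ := fun i x => maxOp n (chi n (hCube (cQ i) (rQ i))) x ^ q * v x
    with hF
  have hsplit : ∀ i, tail n q v (hCube (cQ i) (rQ i)) ≤
      (∑' j, if R i j then ∫⁻ x in (closedBall (cP j) (8 * rP j))ᶜ, F i x else 0) +
      ∑' j, if R' i j then ∫⁻ x in closedBall (cP j) (rP j), F i x else 0 := by
    intro i
    obtain ⟨j, hj⟩ := hR i
    have h1 : ∫⁻ x in (closedBall (cP j) (8 * rP j))ᶜ, F i x ≤
        ∑' j, if R i j then ∫⁻ x in (closedBall (cP j) (8 * rP j))ᶜ, F i x else 0 := by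
      refine le_trans ?_ (ENNReal.le_tsum j)
      rw [if_pos hj]
    have h2 : ∫⁻ x in closedBall (cP j) (8 * rP j), F i x ≤
        ∑' j, if R' i j then ∫⁻ x in closedBall (cP j) (rP j), F i x else 0 := by
      have hc : closedBall (cP j) (8 * rP j) ⊆
          ⋃ j' : {j' // R' i j'}, closedBall (cP j') (rP j') := by
        intro x hx
        obtain ⟨j', hj'⟩ := mem_iUnion.1 (hcov j hx)
        exact mem_iUnion.2 ⟨⟨j', j, hj, x, hj', hx⟩, hCube_subset _ (hrP _).le hj'⟩
      calc _ ≤ ∫⁻ x in ⋃ j' : {j' // R' i j'}, closedBall (cP j') (rP j'), F i x :=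
            lintegral_mono_set hc
        _ ≤ ∑' j' : {j' // R' i j'}, ∫⁻ x in closedBall (cP j') (rP j'), F i x :=
            lintegral_iUnion_le _ _
        _ = ∑' j', {j' | R' i j'}.indicator
              (fun j' => ∫⁻ x in closedBall (cP j') (rP j'), F i x) j' :=
            tsum_subtype {j' | R' i j'} (fun j' => ∫⁻ x in closedBall (cP j') (rP j'), F i x)
        _ = _ := by simp only [indicator_apply]; rfl
    calc tail n q v (hCube (cQ i) (rQ i))
        = (∫⁻ x in closedBall (cP j) (8 * rP j), F i x) +
            ∫⁻ x in (closedBall (cP j) (8 * rP j))ᶜ, F i x :=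
          (lintegral_add_compl _ measurableSet_closedBall).symm
      _ ≤ _ := by rw [add_comm]; exact add_le_add h1 h2
  have hfar : ∀ j, (∑' i, if R i j then ∫⁻ x in (closedBall (cP j) (8 * rP j))ᶜ, F i x else 0) ≤
      (6 ^ n * δ) ^ q * tail n q v (hCube (cP j) (rP j)) := by
    intro j
    calc _ = ∑' i, {i | R i j}.indicator
            (fun i => ∫⁻ x in (closedBall (cP j) (8 * rP j))ᶜ, F i x) i := by
          simp only [indicator_apply]; rfl
      _ = ∑' i : {i // R i j}, ∫⁻ x in (closedBall (cP j) (8 * rP j))ᶜ, F i x :=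
          (tsum_subtype {i | R i j}
            (fun i => ∫⁻ x in (closedBall (cP j) (8 * rP j))ᶜ, F i x)).symm
      _ ≤ _ := by
          rw [tail_hCube q v _ (hrP j).le]
          exact far_sum hv (hrP j) hq1 (Q := fun i : {i // R i j} => hCube (cQ i) (rQ i))
            (fun i => hsub i j i.2) (hδ j)
  have hnr : ∀ j, (∑' i, if R' i j then ∫⁻ x in closedBall (cP j) (rP j), F i x else 0) ≤
      ENNReal.ofReal (32 ^ n * (2 * κ)) *
        ((ENNReal.ofReal (K ^ n) + 2 * 5 ^ n * L) * (∫⁻ x in hCube (cP j) (rP j), v x) +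
          16 * 5 ^ n * ENNReal.ofReal (2 ^ (-(L * ε)) / ε) *
            tail n q v (hCube (cP j) (rP j))) := by
    intro j
    calc _ = ∑' i, {i | R' i j}.indicator
            (fun i => ∫⁻ x in closedBall (cP j) (rP j), F i x) i := by
          simp only [indicator_apply]; rfl
      _ = ∑' i : {i // R' i j}, ∫⁻ x in closedBall (cP j) (rP j), F i x :=
          (tsum_subtype {i | R' i j}
            (fun i => ∫⁻ x in closedBall (cP j) (rP j), F i x)).symm
      _ ≤ _ := by
          rw [tail_hCube q v _ (hrP j).le, setLIntegral_congr (hCube_ae_eq (cP j) (hrP j).le)]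
          refine near_sum hn hv (hrP j) (hfin _ _) hε hε1 (hC _ _ (hrP j)) hκ hq
            (cQ := fun i : {i // R' i j} => cQ i) (rQ := fun i : {i // R' i j} => rQ i)
            (fun i => hrQ i) ?_ hK ?_ L
          · intro a b hab
            exact hdQ fun h => hab (Subtype.ext h)
          · rintro ⟨i, j₀, hj₀, hne⟩
            exact hnear i j₀ j hj₀ hne
  calc _ ≤ ∑' i, ((∑' j, if R i j then ∫⁻ x in (closedBall (cP j) (8 * rP j))ᶜ, F i x else 0) +
        ∑' j, if R' i j then ∫⁻ x in closedBall (cP j) (rP j), F i x else 0) :=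
        ENNReal.tsum_le_tsum hsplit
    _ = (∑' j, ∑' i, if R i j then ∫⁻ x in (closedBall (cP j) (8 * rP j))ᶜ, F i x else 0) +
        ∑' j, ∑' i, if R' i j then ∫⁻ x in closedBall (cP j) (rP j), F i x else 0 := by
        rw [ENNReal.tsum_add, ENNReal.tsum_comm, ENNReal.tsum_comm (f := fun i j =>
          if R' i j then ∫⁻ x in closedBall (cP j) (rP j), F i x else 0)]
    _ ≤ _ := add_le_add (ENNReal.tsum_le_tsum hfar) (ENNReal.tsum_le_tsum hnr)
    _ = _ := by
        rw [lintegral_iUnion (fun j => measurableSet_hCube _ _) hdP]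
        simp only [mul_add]
        rw [ENNReal.tsum_add]
        simp only [← mul_assoc]
        rw [ENNReal.tsum_mul_left, ENNReal.tsum_mul_left, ENNReal.tsum_mul_left]
        ring

/-- A crude bound for disjoint cubes contained in one large cube. -/
lemma crude_bound {n : ℕ} (hn : 1 ≤ n) {v : (Fin n → ℝ) → ℝ≥0∞} (hv : Measurable v)
    (hfin : ∀ c r, ∫⁻ x in closedBall c r, v x ≠ ∞)
    {ε : ℝ} (hε : 0 < ε) (hε1 : ε ≤ 1) {q κ : ℝ} (hκ : 1 ≤ κ) (hq : 1 + 1 / κ ≤ q)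
    (hC : CqCond n q ε v) :
    ∃ A : ℝ≥0∞, A ≠ ∞ ∧ ∀ (ι : Type) [Countable ι] (cQ : ι → Fin n → ℝ) (rQ : ι → ℝ)
      (c : Fin n → ℝ) (r : ℝ), 0 < r → (∀ i, 0 < rQ i) →
      (Pairwise fun i j => Disjoint (hCube (cQ i) (rQ i)) (hCube (cQ j) (rQ j))) →
      (∀ i, hCube (cQ i) (rQ i) ⊆ closedBall c (5 * r)) →
      ∑' i, tail n q v (hCube (cQ i) (rQ i)) ≤ A * tail n q v (closedBall c (8 * r)) := by
  have hq1 : 1 ≤ q := by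
    have : 0 < 1 / κ := by positivity
    linarith
  refine ⟨(6 ^ n * 5 ^ n) ^ q + ENNReal.ofReal (32 ^ n * (2 * κ)) *
    ((ENNReal.ofReal (1 ^ n) + 2 * 5 ^ n * (0 : ℕ)) +
      16 * 5 ^ n * ENNReal.ofReal (2 ^ (-((0 : ℕ) * ε)) / ε)), ?_, ?_⟩
  · have : (6 ^ n * 5 ^ n : ℝ≥0∞) ^ q ≠ ∞ :=
      ENNReal.rpow_ne_top_of_nonneg (by linarith) (by finiteness)
    finiteness
  intro ι _ cQ rQ c r hr hrQ hdisj hsub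
  have h8 : 0 < 8 * r := by positivity
  have hfar := far_sum hv hr hq1 (Q := fun i => hCube (cQ i) (rQ i)) hsub (δ := 5 ^ n) (by
    rw [← measure_iUnion hdisj fun i => measurableSet_hCube _ _]
    refine (measure_mono (iUnion_subset hsub)).trans (le_of_eq ?_)
    rw [vol_cb_mul c c hr.le (by norm_num), ENNReal.ofReal_pow (by norm_num)]
    norm_num)
  have hnear := near_sum hn hv h8 (hfin c _) hε hε1 (hC c _ h8) hκ hq hrQ hdisj
    (K := 1) (by norm_num) (fun i => (hsub i).trans (closedBall_subset_closedBall (by linarith))) 0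
  have ht : tail n q v (closedBall c r) ≤ tail n q v (closedBall c (8 * r)) := by
    refine lintegral_mono fun x => ?_
    dsimp only
    gcongr
    exact maxOp_chi_mono (closedBall_subset_closedBall (by linarith)) x
  have hvt : ∫⁻ x in closedBall c (8 * r), v x ≤ tail n q v (closedBall c (8 * r)) := by
    refine le_trans ?_ (setLIntegral_le_lintegral (closedBall c (8 * r)) _)
    refine setLIntegral_mono_ae' measurableSet_closedBall (ae_of_all _ fun x hx => ?_)
    rw [maxOp_chi_eq_one h8 hx, ENNReal.one_rpow, one_mul]
  calc _ = (∑' i, ∫⁻ x in (closedBall c (8 * r))ᶜ,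
          maxOp n (chi n (hCube (cQ i) (rQ i))) x ^ q * v x) +
        ∑' i, ∫⁻ x in closedBall c (8 * r),
          maxOp n (chi n (hCube (cQ i) (rQ i))) x ^ q * v x := by
        rw [← ENNReal.tsum_add]
        refine tsum_congr fun i => ?_
        rw [add_comm]
        exact (lintegral_add_compl _ measurableSet_closedBall).symm
    _ ≤ (6 ^ n * 5 ^ n) ^ q * tail n q v (closedBall c (8 * r)) + _ :=
        add_le_add (hfar.trans (mul_le_mul_right ht _)) hnear
    _ ≤ _ := by
        refine (add_le_add le_rfl (mul_le_mul_right
          (add_le_add (mul_le_mul_right hvt _) le_rfl) _)).trans (le_of_eq ?_)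
        ring

/-- If the average of `h` over a cube `B` is at least `λ`, then `λ M χ_B ≤ 4^n M h`. -/
lemma maxOp_chi_le_maxOp {n : ℕ} {h : (Fin n → ℝ) → ℝ≥0∞} {c : Fin n → ℝ} {r : ℝ} (hr : 0 < r)
    {lam : ℝ≥0∞} (hlam : lam * volume (closedBall c r) ≤ ∫⁻ y in closedBall c r, h y)
    (x : Fin n → ℝ) :
    lam * maxOp n (chi n (closedBall c r)) x ≤ 4 ^ n * maxOp n h x := by
  have h4 : ENNReal.ofReal (4 ^ n) = 4 ^ n := by
    rw [ENNReal.ofReal_pow (by norm_num)]; norm_num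
  have hVpos : volume (closedBall c r) ≠ 0 := vol_cb_pos c hr
  have hVtop : volume (closedBall c r) ≠ ∞ := vol_cb_top c r
  by_cases hx : dist x c ≤ 2 * r
  · have h1 := maxOp_lower (h := h) hr (by linarith : r ≤ 2 * r) hx
    rw [show (2 * (2 * r)) ^ n = 2 ^ n * (2 * r) ^ n by rw [← mul_pow],
      ENNReal.ofReal_mul (by positivity), ← vol_cb c hr.le] at h1
    have h2 : volume (closedBall c r) * lam ≤
        volume (closedBall c r) * (ENNReal.ofReal (2 ^ n) * maxOp n h x) := by
      rw [mul_comm]; exact (hlam.trans h1).trans (le_of_eq (by ring))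
    have h3 := (ENNReal.mul_le_mul_iff_right hVpos hVtop).1 h2
    calc _ ≤ lam * 1 := by gcongr; exact maxOp_chi_le_one _ _
      _ ≤ ENNReal.ofReal (2 ^ n) * maxOp n h x := by rw [mul_one]; exact h3
      _ ≤ _ := by rw [← h4]; gcongr; norm_num
  · push Not at hx
    set D := dist x c with hD
    have hD0 : 0 < D := by linarith
    have h1 := maxOp_chi_le_far (Q := closedBall c r) (x := x) (D := D / 2) (by positivity) (by
      intro y hy
      rw [mem_closedBall] at hy
      have := dist_triangle x y c
      linarith)
    have h2 := maxOp_lower (h := h) hr (by linarith : r ≤ D) hD.ge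
    have hp : ENNReal.ofReal ((D / 2) ^ n) ≠ 0 := by
      simp only [ne_eq, ENNReal.ofReal_eq_zero, not_le]; positivity
    calc _ ≤ lam * ((ENNReal.ofReal ((D / 2) ^ n))⁻¹ * volume (closedBall c r)) := by gcongr
      _ = (ENNReal.ofReal ((D / 2) ^ n))⁻¹ * (lam * volume (closedBall c r)) := by ring
      _ ≤ (ENNReal.ofReal ((D / 2) ^ n))⁻¹ * (ENNReal.ofReal ((2 * D) ^ n) * maxOp n h x) := by
          exact mul_le_mul_right (hlam.trans h2) _
      _ = (ENNReal.ofReal ((D / 2) ^ n))⁻¹ * ENNReal.ofReal ((D / 2) ^ n) *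
            (4 ^ n * maxOp n h x) := by
          rw [show (2 * D) ^ n = (D / 2) ^ n * 4 ^ n by rw [← mul_pow]; congr 1; ring,
            ENNReal.ofReal_mul (by positivity), h4]; ring
      _ = _ := by rw [ENNReal.inv_mul_cancel hp ENNReal.ofReal_ne_top, one_mul]

/-! ### Whitney cubes -/

lemma eucDist_eq {n : ℕ} (x y : Fin n → ℝ) : eucDist x y =
    dist (WithLp.toLp 2 x : EuclideanSpace ℝ (Fin n)) (WithLp.toLp 2 y) := by
  rw [EuclideanSpace.dist_eq]
  simp [eucDist, Real.dist_eq, sq_abs]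

lemma eucDist_triangle {n : ℕ} (x y z : Fin n → ℝ) :
    eucDist x z ≤ eucDist x y + eucDist y z := by
  simp only [eucDist_eq]
  exact dist_triangle _ _ _

lemma eucDist_comm {n : ℕ} (x y : Fin n → ℝ) : eucDist x y = eucDist y x := by
  simp only [eucDist_eq]
  exact dist_comm _ _

lemma eucDist_nonneg {n : ℕ} (x y : Fin n → ℝ) : 0 ≤ eucDist x y := Real.sqrt_nonneg _

lemma dist_le_eucDist {n : ℕ} (x y : Fin n → ℝ) : dist x y ≤ eucDist x y := by
  refine (dist_pi_le_iff (eucDist_nonneg x y)).2 fun i => ?_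
  rw [Real.dist_eq]
  exact Real.abs_le_sqrt (Finset.single_le_sum (f := fun i => (x i - y i) ^ 2)
    (fun _ _ => sq_nonneg _) (Finset.mem_univ i))

lemma eucDist_le {n : ℕ} (x y : Fin n → ℝ) : eucDist x y ≤ √n * dist x y := by
  have h : ∑ i, (x i - y i) ^ 2 ≤ n * dist x y ^ 2 := by
    calc _ ≤ ∑ _i : Fin n, dist x y ^ 2 := by
          refine Finset.sum_le_sum fun i _ => ?_
          rw [← sq_abs, ← Real.dist_eq]
          exact pow_le_pow_left₀ dist_nonneg (dist_le_pi_dist x y i) 2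
      _ = _ := by simp
  calc eucDist x y ≤ √(n * dist x y ^ 2) := Real.sqrt_le_sqrt h
    _ = _ := by rw [Real.sqrt_mul (by positivity), Real.sqrt_sq dist_nonneg]

/-- A Whitney cube of `Ω` with centre `c` and half-side `r` is at Euclidean distance comparable to
`√n r` from the complement of `Ω`. The constants are not sharp. -/
lemma whitney_geom {n : ℕ} (hn : 1 ≤ n) {c : Fin n → ℝ} {r : ℝ} (hr : 0 < r)
    {Ω : Set (Fin n → ℝ)}
    (h5 : 5 ≤ eucSetDist (hCube c r) Ωᶜ / eucDiam (hCube c r))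
    (h15 : eucSetDist (hCube c r) Ωᶜ / eucDiam (hCube c r) ≤ 15) :
    (∀ z ∉ Ω, 9 * √n * r ≤ eucDist c z) ∧ ∃ z ∉ Ω, eucDist c z ≤ 32 * √n * r := by
  have hsn : 0 < √(n : ℝ) := Real.sqrt_pos.2 (by exact_mod_cast hn)
  have hcm : c ∈ hCube c r := center_mem_hCube c hr
  have hin : ∀ a ∈ hCube c r, eucDist c a ≤ √n * r := fun a ha => by
    refine (eucDist_le c a).trans ?_
    gcongr
    rw [dist_comm]
    exact hCube_subset c hr.le ha
  have hup : ∀ d ∈ {d | ∃ a ∈ hCube c r, ∃ b ∈ hCube c r, d = eucDist a b},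
      d ≤ 2 * √n * r := by
    rintro d ⟨a, ha, b, hb, rfl⟩
    have h1 := eucDist_triangle a c b
    have h2 := hin a ha
    have h3 := hin b hb
    rw [eucDist_comm a c] at h1
    linarith
  have hdu : eucDiam (hCube c r) ≤ 2 * √n * r :=
    csSup_le ⟨_, c, hcm, c, hcm, rfl⟩ hup
  -- The supremum over the half-open cube is not attained; points slightly inside suffice.
  have hdl : 19 / 10 * √n * r ≤ eucDiam (hCube c r) := by
    refine le_csSup ⟨_, hup⟩ ⟨fun i => c i + 9 / 10 * r, fun i => ⟨by linarith, by linarith⟩,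
      fun i => c i - r, fun i => ⟨le_rfl, by linarith⟩, ?_⟩
    have : ∀ i, (c i + 9 / 10 * r - (c i - r)) ^ 2 = (19 / 10 * r) ^ 2 := fun i => by ring
    simp only [eucDist, this, Finset.sum_const, Finset.card_univ, Fintype.card_fin, nsmul_eq_mul]
    rw [Real.sqrt_mul (by positivity), Real.sqrt_sq (by positivity)]
    ring
  have hd0 : 0 < eucDiam (hCube c r) := lt_of_lt_of_le (by positivity) hdl
  rw [le_div_iff₀ hd0] at h5
  rw [div_le_iff₀ hd0] at h15
  have hS : 0 < eucSetDist (hCube c r) Ωᶜ := lt_of_lt_of_le (by positivity) h5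
  have hbd : BddBelow {d | ∃ a ∈ hCube c r, ∃ b ∈ Ωᶜ, d = eucDist a b} :=
    ⟨0, by rintro d ⟨a, -, b, -, rfl⟩; exact eucDist_nonneg _ _⟩
  have hne : {d | ∃ a ∈ hCube c r, ∃ b ∈ Ωᶜ, d = eucDist a b}.Nonempty := by
    by_contra h
    rw [Set.not_nonempty_iff_eq_empty] at h
    rw [eucSetDist, h, Real.sInf_empty] at hS
    exact lt_irrefl _ hS
  have hpos : 0 < √n * r := by positivity
  refine ⟨fun z hz => ?_, ?_⟩
  · have : eucSetDist (hCube c r) Ωᶜ ≤ eucDist c z := csInf_le hbd ⟨c, hcm, z, hz, rfl⟩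
    linarith
  · obtain ⟨d, ⟨a, ha, z, hz, rfl⟩, hlt⟩ := exists_lt_of_csInf_lt hne
      (show sInf _ < 31 * √n * r by
        have : eucSetDist (hCube c r) Ωᶜ < 31 * √n * r := by linarith
        exact this)
    refine ⟨z, hz, ?_⟩
    have h1 := eucDist_triangle c a z
    have h2 := hin a ha
    linarith

section Whitney

variable {n : ℕ} {Ω Ω' : Set (Fin n → ℝ)} {c c' d : Fin n → ℝ} {r r' s : ℝ}

lemma whitney_closedBall_subset (hn : 1 ≤ n) (hr : 0 < r)
    (h : ∀ z ∉ Ω, 9 * √n * r ≤ eucDist c z) : closedBall c (8 * r) ⊆ Ω := by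
  have hsn : 0 < √(n : ℝ) := Real.sqrt_pos.2 (by exact_mod_cast hn)
  intro z hz
  by_contra hzΩ
  have h1 := (h z hzΩ).trans (eucDist_le c z)
  rw [mem_closedBall, dist_comm] at hz
  have h2 : √n * dist c z ≤ √n * (8 * r) := by gcongr
  have : 0 < √n * r := by positivity
  linarith

/-- A Whitney cube of a smaller open set whose centre lies in a Whitney cube `P` of a larger one
is contained in `5P`. -/
lemma whitney_nested (hn : 1 ≤ n) (hΩ : Ω ⊆ Ω') (hr : 0 < r) (hs : 0 < s)
    (hQ : ∀ z ∉ Ω, 9 * √n * r ≤ eucDist c z)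
    (hP : ∃ z ∉ Ω', eucDist d z ≤ 32 * √n * s) (hc : c ∈ hCube d s) :
    hCube c r ⊆ closedBall d (5 * s) := by
  have hsn : 0 < √(n : ℝ) := Real.sqrt_pos.2 (by exact_mod_cast hn)
  obtain ⟨z, hz, hdz⟩ := hP
  have hcd : dist c d ≤ s := hCube_subset d hs.le hc
  have h1 := (hQ z fun h => hz (hΩ h)).trans (eucDist_triangle c d z)
  have h2 : eucDist c d ≤ √n * s := (eucDist_le c d).trans (by gcongr)
  have h3 : √n * (9 * r) ≤ √n * (33 * s) := by linarith
  have h4 := le_of_mul_le_mul_left h3 hsn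
  refine (hCube_subset c hr.le).trans (closedBall_subset_closedBall' ?_)
  linarith

/-- If a Whitney cube `P'` meets `8P`, then `5P` is contained in a fixed dilate of `P'`. -/
lemma whitney_near (hn : 1 ≤ n) (hr' : 0 < r')
    (hP : ∀ z ∉ Ω, 9 * √n * r ≤ eucDist c z)
    (hP' : ∃ z ∉ Ω, eucDist c' z ≤ 32 * √n * r')
    (hne : (hCube c' r' ∩ closedBall c (8 * r)).Nonempty) :
    closedBall c (5 * r) ⊆ closedBall c' (430 * r') := by
  have hsn : 0 < √(n : ℝ) := Real.sqrt_pos.2 (by exact_mod_cast hn)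
  obtain ⟨x, hx', hx⟩ := hne
  obtain ⟨z, hz, hdz⟩ := hP'
  have hxc' : dist x c' ≤ r' := hCube_subset c' hr'.le hx'
  rw [mem_closedBall, dist_comm] at hx
  have h1 := hP z hz
  have h2 := eucDist_triangle c x z
  have h3 := eucDist_triangle x c' z
  have h4 : eucDist c x ≤ √n * (8 * r) := (eucDist_le c x).trans (by gcongr)
  have h5 : eucDist x c' ≤ √n * r' := (eucDist_le x c').trans (by gcongr)
  have h6 : √n * r ≤ √n * (33 * r') := by linarith
  have h7 := le_of_mul_le_mul_left h6 hsn
  refine closedBall_subset_closedBall' ?_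
  have := dist_triangle c x c'
  linarith

end Whitney

/-- The family of half-open cubes with centres `c i` and half-sides `r i` is a Whitney
decomposition of `Ω`: a partition of `Ω` by cubes whose size is comparable to their distance from
the complement of `Ω`. -/
structure IsWhitney {n : ℕ} (Ω : Set (Fin n → ℝ)) {ι : Type*} (c : ι → Fin n → ℝ) (r : ι → ℝ) :
    Prop where
  pos : ∀ i, 0 < r i
  disj : Pairwise fun i j => Disjoint (hCube (c i) (r i)) (hCube (c j) (r j))
  union : ⋃ i, hCube (c i) (r i) = Ω
  lower : ∀ i, ∀ z ∉ Ω, 9 * √n * r i ≤ eucDist (c i) z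
  upper : ∀ i, ∃ z ∉ Ω, eucDist (c i) z ≤ 32 * √n * r i

/-- The recursion between the Whitney decompositions of two level sets `{M g > β} ⊆ {M g > α}`
of a maximal function. The number `δ ≈ α / β` comes from the local weak-type estimate. -/
lemma whitney_recursion {n : ℕ} (hn : 1 ≤ n) {v : (Fin n → ℝ) → ℝ≥0∞} (hv : Measurable v)
    (hfin : ∀ c r, ∫⁻ x in closedBall c r, v x ≠ ∞)
    {ε : ℝ} (hε : 0 < ε) (hε1 : ε ≤ 1) {q κ : ℝ} (hκ : 1 ≤ κ) (hq : 1 + 1 / κ ≤ q)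
    (hC : CqCond n q ε v) (g : (Fin n → ℝ) → ℝ≥0∞) {α β δ : ℝ≥0∞} (hβ0 : β ≠ 0) (hβt : β ≠ ∞)
    (hαβ : ENNReal.ofReal ((32 * √n + 6) ^ n) * α ≤ β)
    (hδ : ENNReal.ofReal ((5 * (7 + 32 * √n)) ^ n) * α ≤ β * δ)
    {ι J : Type*} [Countable ι] [Countable J] {cQ : ι → Fin n → ℝ} {rQ : ι → ℝ}
    {cP : J → Fin n → ℝ} {rP : J → ℝ}
    (hQ : IsWhitney {x | β < maxOp n g x} cQ rQ) (hP : IsWhitney {x | α < maxOp n g x} cP rP)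
    (L : ℕ) :
    ∑' i, tail n q v (hCube (cQ i) (rQ i)) ≤
      ((6 ^ n * δ) ^ q + ENNReal.ofReal (32 ^ n * (2 * κ)) *
          (16 * 5 ^ n * ENNReal.ofReal (2 ^ (-(L * ε)) / ε))) *
        ∑' j, tail n q v (hCube (cP j) (rP j)) +
      ENNReal.ofReal (32 ^ n * (2 * κ)) * (ENNReal.ofReal (430 ^ n) + 2 * 5 ^ n * L) *
        ∫⁻ x in {x | α < maxOp n g x}, v x := by
  have hαβ' : α ≤ β := by
    refine le_trans ?_ hαβ
    have : (1 : ℝ) ≤ (32 * √n + 6) ^ n :=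
      one_le_pow₀ (by have := Real.sqrt_nonneg (n : ℝ); linarith)
    calc α = 1 * α := (one_mul _).symm
      _ ≤ _ := by gcongr; exact ENNReal.one_le_ofReal.2 this
  have hΩ : {x | β < maxOp n g x} ⊆ {x | α < maxOp n g x} := fun x hx => lt_of_le_of_lt hαβ' hx
  have hsub : ∀ i j, cQ i ∈ hCube (cP j) (rP j) →
      hCube (cQ i) (rQ i) ⊆ closedBall (cP j) (5 * rP j) := fun i j hij =>
    whitney_nested hn hΩ (hQ.pos i) (hP.pos j) (hQ.lower i) (hP.upper j) hij
  have key := recursion_step hn hv hfin hε hε1 hκ hq hC hQ.pos hP.pos hQ.disj hP.disj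
    (fun i j => cQ i ∈ hCube (cP j) (rP j)) ?_ hsub (δ := δ) ?_ ?_ (K := 430) (by norm_num) ?_ L
  · rwa [hP.union] at key
  · intro i
    have h1 : cQ i ∈ ⋃ j, hCube (cP j) (rP j) := by
      rw [hP.union]
      refine hΩ ?_
      rw [← hQ.union]
      exact mem_iUnion.2 ⟨i, center_mem_hCube _ (hQ.pos i)⟩
    exact mem_iUnion.1 h1
  · intro j
    obtain ⟨z, hz, hdz⟩ := hP.upper j
    have h1 : ∑' i : {i // cQ i ∈ hCube (cP j) (rP j)}, volume (hCube (cQ i) (rQ i)) ≤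
        volume ({x | β < maxOp n g x} ∩ closedBall (cP j) (5 * rP j)) := by
      rw [← measure_iUnion (fun a b hab => hQ.disj fun h => hab (Subtype.ext h))
        fun i => measurableSet_hCube _ _]
      refine measure_mono (iUnion_subset fun i => subset_inter ?_ (hsub i j i.2))
      rw [← hQ.union]
      exact subset_iUnion (fun i => hCube (cQ i) (rQ i)) i
    have h2 := local_weak hn g (hP.pos j) (K := 32 * √n) (by positivity)
      ((dist_le_eucDist _ _).trans hdz) (not_lt.1 hz) hαβ hβ0
    refine h1.trans ((ENNReal.mul_le_mul_iff_right hβ0 hβt).1 (h2.trans ?_))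
    rw [← mul_assoc]
    gcongr
  · intro j
    rw [hP.union]
    exact whitney_closedBall_subset hn (hP.pos j) (hP.lower j)
  · intro i j j' hij hne
    exact (hsub i j hij).trans
      (whitney_near hn (hP.pos j') (hP.lower j) (hP.upper j') hne)

/-! ### A priori bound and iteration -/

/-- At low levels the level set `{M g > t}` of a compactly supported function is contained
in one cube centred at the origin, on which the average of `g` is comparable to `t`. This gives a bound for
the sum of the tails which is uniform in `t`; it is only used qualitatively, to start the iteration
of the recursion. -/
lemma apriori_bound {n : ℕ} (hn : 1 ≤ n) {v : (Fin n → ℝ) → ℝ≥0∞} (hv : Measurable v)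
    (hfin : ∀ c r, ∫⁻ x in closedBall c r, v x ≠ ∞)
    {ε : ℝ} (hε : 0 < ε) (hε1 : ε ≤ 1) {p q κ : ℝ} (hp : 0 ≤ p) (hpq : p ≤ q)
    (hκ : 1 ≤ κ) (hq : 1 + 1 / κ ≤ q) (hC : CqCond n q ε v)
    {g : (Fin n → ℝ) → ℝ≥0∞} {ρ : ℝ} (hρ : 0 ≤ ρ) (hsupp : ∀ x ∉ closedBall 0 ρ, g x = 0)
    (hg0 : ∫⁻ x, g x ≠ 0) (hgt : ∫⁻ x, g x ≠ ∞) :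
    ∃ A : ℝ≥0∞, A ≠ ∞ ∧ ∀ t : ℝ≥0∞, t ≠ 0 → t ≠ ∞ → t * ENNReal.ofReal (ρ ^ n) ≤ ∫⁻ x, g x →
      ∀ (ι : Type) [Countable ι] (c : ι → Fin n → ℝ) (r : ι → ℝ),
      IsWhitney {x | t < maxOp n g x} c r →
      t ^ p * ∑' i, tail n q v (hCube (c i) (r i)) ≤ A * ∫⁻ x, maxOp n g x ^ p * v x := by
  obtain ⟨A, hA, hcrude⟩ := crude_bound hn hv hfin hε hε1 hκ hq hC
  refine ⟨A * (64 ^ n) ^ p, ?_, ?_⟩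
  · have : (64 ^ n : ℝ≥0∞) ^ p ≠ ∞ := ENNReal.rpow_ne_top_of_nonneg hp (by finiteness)
    finiteness
  intro t ht0 htt htρ ι _ c r hW
  have hn0 : n ≠ 0 := by omega
  set I := ∫⁻ x, g x with hI
  -- The half-side `m` of the comparison cube: `t mⁿ = ∫ g`.
  obtain ⟨m, hm0, hm⟩ : ∃ m : ℝ, 0 < m ∧ t * ENNReal.ofReal (m ^ n) = I := by
    have h1 : I / t ≠ ∞ := ENNReal.div_ne_top hgt ht0
    have h2 : 0 < (I / t).toReal := ENNReal.toReal_pos (ENNReal.div_ne_zero.2 ⟨hg0, htt⟩) h1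
    refine ⟨(I / t).toReal ^ (1 / n : ℝ), by positivity, ?_⟩
    rw [← Real.rpow_natCast, ← Real.rpow_mul h2.le, one_div,
      inv_mul_cancel₀ (by exact_mod_cast hn0), Real.rpow_one, ENNReal.ofReal_toReal h1,
      ENNReal.mul_div_cancel ht0 htt]
  have hlt : ∀ {a : ℝ}, 0 ≤ a → t * ENNReal.ofReal (a ^ n) ≤ I → a ≤ m := by
    intro a ha h
    rw [← hm, ENNReal.mul_le_mul_iff_right ht0 htt,
      ENNReal.ofReal_le_ofReal_iff (by positivity)] at h
    exact (pow_le_pow_iff_left₀ ha hm0.le hn0).1 h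
  have hρm : ρ ≤ m := hlt hρ htρ
  have hΩ : {x | t < maxOp n g x} ⊆ closedBall 0 (5 * m) := by
    intro x hx
    obtain ⟨c', r', hr', hxc', h⟩ := exists_of_lt_maxOp hx
    have h1 : 2 * r' ≤ m := by
      refine hlt (by positivity) ?_
      rw [← vol_cb c' hr'.le]
      exact h.le.trans (setLIntegral_le_lintegral _ _)
    have h2 : ∃ y ∈ closedBall c' r', y ∈ closedBall (0 : Fin n → ℝ) ρ := by
      by_contra! hcon
      have : ∫⁻ y in closedBall c' r', g y = 0 := by
        rw [setLIntegral_congr_fun measurableSet_closedBall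
          (fun y hy => hsupp y (hcon y hy)), lintegral_zero]
      rw [this] at h
      exact absurd h (by simp)
    obtain ⟨y, hy, hy0⟩ := h2
    rw [mem_closedBall] at hxc' hy hy0 ⊢
    have h3 := dist_triangle x c' 0
    have h4 := dist_triangle c' y 0
    rw [dist_comm c' y] at h4
    linarith
  have hsub : ∀ i, hCube (c i) (r i) ⊆ closedBall 0 (5 * m) := fun i => by
    refine subset_trans ?_ hΩ
    rw [← hW.union]
    exact subset_iUnion (fun i => hCube (c i) (r i)) i
  have h1 := hcrude ι c r 0 m hm0 hW.pos hW.disj hsub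
  have h16 : ENNReal.ofReal (16 ^ n) = 16 ^ n := by
    rw [ENNReal.ofReal_pow (by norm_num)]; norm_num
  have h16' : (16 ^ n : ℝ≥0∞) ≠ 0 := by positivity
  have h16t : (16 ^ n : ℝ≥0∞) ≠ ∞ := by finiteness
  have hpt : ∀ x, t * maxOp n (chi n (closedBall 0 (8 * m))) x ≤ 64 ^ n * maxOp n g x := by
    intro x
    have h2 : t / 16 ^ n * volume (closedBall (0 : Fin n → ℝ) (8 * m)) ≤
        ∫⁻ y in closedBall 0 (8 * m), g y := by
      have h3 : ∫⁻ y in closedBall 0 (8 * m), g y = I := by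
        rw [← lintegral_indicator measurableSet_closedBall, hI]
        congr 1
        refine indicator_eq_self.2 fun y hy => ?_
        by_contra hcon
        exact hy (hsupp y fun h => hcon (closedBall_subset_closedBall (by linarith) h))
      rw [h3, vol_cb _ (by positivity), show (2 * (8 * m)) ^ n = 16 ^ n * m ^ n by
        rw [← mul_pow]; congr 1; ring, ENNReal.ofReal_mul (by positivity), h16, ← mul_assoc,
        ENNReal.div_mul_cancel h16' h16t, hm]
    have h3 := maxOp_chi_le_maxOp (by positivity) h2 x
    calc _ = 16 ^ n * (t / 16 ^ n * maxOp n (chi n (closedBall 0 (8 * m))) x) := by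
          rw [← mul_assoc, ENNReal.mul_div_cancel h16' h16t]
      _ ≤ 16 ^ n * (4 ^ n * maxOp n g x) := mul_le_mul_right h3 _
      _ = _ := by rw [← mul_assoc, ← mul_pow]; norm_num
  have htail : t ^ p * tail n q v (closedBall 0 (8 * m)) ≤
      (64 ^ n) ^ p * ∫⁻ x, maxOp n g x ^ p * v x := by
    rw [tail, ← lintegral_const_mul _ (measurable_tail hv q _),
      ← lintegral_const_mul _ (show Measurable fun x => maxOp n g x ^ p * v x from
        ((measurable_maxOp g).pow_const p).mul hv)]
    refine lintegral_mono fun x => ?_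
    dsimp only
    rw [← mul_assoc, ← mul_assoc]
    refine mul_le_mul_left ?_ _
    calc t ^ p * maxOp n (chi n (closedBall 0 (8 * m))) x ^ q
        ≤ t ^ p * maxOp n (chi n (closedBall 0 (8 * m))) x ^ p :=
          mul_le_mul_right
            (ENNReal.rpow_le_rpow_of_exponent_ge (maxOp_chi_le_one _ _) hpq) _
      _ = (t * maxOp n (chi n (closedBall 0 (8 * m))) x) ^ p :=
          (ENNReal.mul_rpow_of_nonneg _ _ hp).symm
      _ ≤ (64 ^ n * maxOp n g x) ^ p := ENNReal.rpow_le_rpow (hpt x) hp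
      _ = _ := ENNReal.mul_rpow_of_nonneg _ _ hp
  calc _ ≤ t ^ p * (A * tail n q v (closedBall 0 (8 * m))) := mul_le_mul_right h1 _
    _ = A * (t ^ p * tail n q v (closedBall 0 (8 * m))) := by ring
    _ ≤ A * ((64 ^ n) ^ p * ∫⁻ x, maxOp n g x ^ p * v x) := mul_le_mul_right htail _
    _ = _ := by ring

/-- A sequence which satisfies a contractive recursion with step `N` and is bounded near `-∞` is
controlled in `ℓ¹` by the inhomogeneous term. -/
lemma tsum_le_of_recursion {S T : ℤ → ℝ≥0∞} {N : ℕ} (hN : 1 ≤ N) {D M : ℝ≥0∞} (hM : M ≠ ∞)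
    {k₀ : ℤ} (hS : ∀ k ≤ k₀, S k ≤ M)
    (hrec : ∀ k, S k ≤ 1 / 2 * S (k - N) + D * T (k - N)) :
    ∑' k, S k ≤ 2 * D * ∑' k, T k := by
  have hiter : ∀ (m : ℕ) (k : ℤ), S k ≤ (1 / 2) ^ m * S (k - m * N) +
      ∑ i ∈ Finset.range m, (1 / 2) ^ i * (D * T (k - (i + 1) * N)) := by
    intro m
    induction m with
    | zero => intro k; simp
    | succ m ih =>
      intro k
      calc S k ≤ (1 / 2) ^ m * S (k - m * N) +
            ∑ i ∈ Finset.range m, (1 / 2) ^ i * (D * T (k - (i + 1) * N)) := ih k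
        _ ≤ (1 / 2) ^ m * (1 / 2 * S (k - m * N - N) + D * T (k - m * N - N)) +
            ∑ i ∈ Finset.range m, (1 / 2) ^ i * (D * T (k - (i + 1) * N)) :=
          add_le_add (mul_le_mul_right (hrec _) _) le_rfl
        _ = _ := by
          rw [Finset.sum_range_succ, show k - m * N - N = k - ((m : ℤ) + 1) * N by ring]
          push_cast
          ring
  have hlim : ∀ k, S k ≤ ∑' i : ℕ, (1 / 2) ^ i * (D * T (k - (i + 1) * N)) := by
    intro k
    have hb : ∀ᶠ m : ℕ in atTop, S k ≤ (1 / 2) ^ m * M +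
        ∑' i : ℕ, (1 / 2) ^ i * (D * T (k - (i + 1) * N)) := by
      filter_upwards [eventually_ge_atTop (k - k₀).toNat] with m hm
      refine (hiter m k).trans (add_le_add (mul_le_mul_right (hS _ ?_) _) (ENNReal.sum_le_tsum _))
      have h1 : k - k₀ ≤ m := (Int.self_le_toNat _).trans (by exact_mod_cast hm)
      have h2 : (m : ℤ) * 1 ≤ m * N :=
        mul_le_mul_of_nonneg_left (by exact_mod_cast hN) (by positivity)
      linarith
    have ht : Tendsto (fun m : ℕ => (1 / 2 : ℝ≥0∞) ^ m * M +
        ∑' i : ℕ, (1 / 2) ^ i * (D * T (k - (i + 1) * N))) atTop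
        (nhds (0 * M + ∑' i : ℕ, (1 / 2) ^ i * (D * T (k - (i + 1) * N)))) := by
      refine Tendsto.add (ENNReal.Tendsto.mul_const ?_ (Or.inr hM)) tendsto_const_nhds
      refine ENNReal.tendsto_pow_atTop_nhds_zero_of_lt_one ?_
      rw [one_div]
      exact ENNReal.inv_lt_one.2 (by norm_num)
    rw [zero_mul, zero_add] at ht
    exact ge_of_tendsto ht hb
  calc ∑' k, S k ≤ ∑' k, ∑' i : ℕ, (1 / 2) ^ i * (D * T (k - (i + 1) * N)) :=
        ENNReal.tsum_le_tsum hlim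
    _ = ∑' i : ℕ, (1 / 2) ^ i * (D * ∑' k, T k) := by
        rw [ENNReal.tsum_comm]
        refine tsum_congr fun i => ?_
        rw [ENNReal.tsum_mul_left, ENNReal.tsum_mul_left]
        congr 2
        exact (Equiv.subRight ((i + 1) * N : ℤ)).tsum_eq T
    _ = _ := by
        rw [ENNReal.tsum_mul_right, ENNReal.tsum_geometric, one_div, ENNReal.one_sub_inv_two,
          inv_inv, mul_assoc]

/-- `∑ₖ 2^{kp} 1_{2^k < y} ≤ 2 y^p`. -/
lemma tsum_level_le {p : ℝ} (hp : 1 ≤ p) (y : ℝ≥0∞) :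
    ∑' k : ℤ, (if (2 : ℝ≥0∞) ^ k < y then ((2 : ℝ≥0∞) ^ k) ^ p else 0) ≤ 2 * y ^ p := by
  have h20 : (2 : ℝ≥0∞) ≠ 0 := by norm_num
  have h2t : (2 : ℝ≥0∞) ≠ ∞ := by norm_num
  rcases eq_or_ne y 0 with rfl | hy0
  · simp
  rcases eq_or_ne y ∞ with rfl | hyt
  · rw [ENNReal.top_rpow_of_pos (by linarith), ENNReal.mul_top h20]
    exact le_top
  obtain ⟨k₁, hk₁, hk₂⟩ := ENNReal.exists_mem_Ioc_zpow hy0 hyt (by norm_num : (1 : ℝ≥0∞) < 2) h2t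
  have hinj : Function.Injective fun i : ℕ => k₁ - (i : ℤ) := fun a b h => by
    simp only at h
    omega
  rw [← hinj.tsum_eq]
  · calc _ ≤ ∑' i : ℕ, (1 / 2) ^ i * y ^ p := by
          refine ENNReal.tsum_le_tsum fun i => ?_
          have h1 : ((2 : ℝ≥0∞) ^ (k₁ - (i : ℤ))) ^ p ≤ (1 / 2) ^ i * y ^ p := by
            rw [sub_eq_add_neg, ENNReal.zpow_add h20 h2t, mul_comm,
              ENNReal.mul_rpow_of_nonneg _ _ (by linarith), ENNReal.zpow_neg, zpow_natCast,
              one_div, ENNReal.inv_pow]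
            refine mul_le_mul' ?_ (ENNReal.rpow_le_rpow hk₁.le (by linarith))
            conv_rhs => rw [← ENNReal.rpow_one ((2 : ℝ≥0∞)⁻¹ ^ i)]
            refine ENNReal.rpow_le_rpow_of_exponent_ge ?_ hp
            exact pow_le_one₀ zero_le (ENNReal.inv_le_one.2 (by norm_num))
          split_ifs
          · exact h1
          · exact zero_le
      _ = _ := by
          rw [ENNReal.tsum_mul_right, ENNReal.tsum_geometric, one_div, ENNReal.one_sub_inv_two,
            inv_inv]
  · intro k hk
    have hlt : (2 : ℝ≥0∞) ^ k < y := by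
      by_contra hcon
      simp [hcon] at hk
    have h1 : k < k₁ + 1 := by
      by_contra! hcon
      exact absurd (hlt.trans_le hk₂)
        (not_lt.2 (ENNReal.zpow_le_of_le (by norm_num) hcon))
    exact ⟨(k₁ - k).toNat, by simp only; omega⟩

/-! ### Choice of parameters -/

/-- The choice of the two integer parameters: `N` is the number of levels between two
consecutive generations and `L` the number of dyadic scales treated separately in the
`L log L`-type estimate. Their sizes are governed by `s = pq / (q - p)` and by
`(1/ε) log (1/ε)`. -/
lemma exists_parameters {b e C3 C4 : ℝ} (hb : 0 ≤ b) (he : 0 ≤ e) (h3 : 0 ≤ C3) (h4 : 0 ≤ C4) :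
    ∃ cn > (0 : ℝ), ∀ p q ε : ℝ, 1 < p → p < q → 0 < ε → ε < 1 / 2 → ∃ N L : ℕ, 1 ≤ N ∧
      (2 : ℝ) ^ b ≤ 2 ^ N ∧ ((2 : ℝ) ^ b * 2 ^ (-(N : ℝ))) ^ q * 2 ^ (N * p) ≤ 1 / 4 ∧
      2 ^ e * (q / (q - p)) * (2 ^ (-(L * ε)) / ε) * 2 ^ (N * p) ≤ 1 / 4 ∧
      4 * ((2 : ℝ) ^ (N * p) * (q / (q - p)) * (C3 + C4 * L)) ≤
        cn * 2 ^ (cn * p * q / (q - p)) * (1 / ε) * Real.log (1 / ε) := by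
  have hlog2 : 0 < Real.log 2 := Real.log_pos (by norm_num)
  set B := 4 * (C3 + C4 * (b + e + 8)) / Real.log 2 with hB
  have hB0 : 0 ≤ B := by positivity
  refine ⟨b + 5 + B, by positivity, fun p q ε hp hpq hε hε2 => ?_⟩
  have hqp : 0 < q - p := by linarith
  have hq0 : 0 < q := by linarith
  set κ := q / (q - p) with hκ
  have hκ1 : 1 ≤ κ := by rw [hκ, le_div_iff₀ hqp]; linarith
  set s := p * κ with hs
  have hκs : κ ≤ s := by rw [hs]; nlinarith
  have hs1 : 1 ≤ s := hκ1.trans hκs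
  set l := Real.logb 2 (1 / ε) with hl
  have hε2' : 2 ≤ 1 / ε := by rw [le_div_iff₀ hε]; linarith
  have hl1 : 1 ≤ l := by
    rw [hl, Real.le_logb_iff_rpow_le (by norm_num) (by positivity)]; simpa using hε2'
  set N := ⌈κ * (b + 2)⌉₊ with hN
  have hN1 : κ * (b + 2) ≤ N := Nat.le_ceil _
  have hN2 : (N : ℝ) ≤ κ * (b + 3) := by
    have := (Nat.ceil_lt_add_one (show 0 ≤ κ * (b + 2) by positivity)).le
    calc (N : ℝ) ≤ κ * (b + 2) + 1 := this
      _ ≤ _ := by linarith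
  have hNp : N * p ≤ s * (b + 3) := by
    calc N * p ≤ κ * (b + 3) * p := by gcongr
      _ = _ := by rw [hs]; ring
  set X := N * p + e + Real.logb 2 κ + l + 2 with hX
  have hlκ0 : 0 ≤ Real.logb 2 κ := Real.logb_nonneg (by norm_num) hκ1
  have hlκ : Real.logb 2 κ ≤ s := by
    refine le_trans ?_ hκs
    rw [Real.logb_le_iff_le_rpow (by norm_num) (by positivity)]
    have := one_add_mul_self_le_rpow_one_add (s := 1) (by norm_num) hκ1
    norm_num at this
    linarith
  have hX0 : 0 ≤ X := by positivity
  set L := ⌈1 / ε * X⌉₊ with hL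
  have hL1 : 1 / ε * X ≤ L := Nat.le_ceil _
  have hL2 : (L : ℝ) ≤ 1 / ε * X + 1 :=
    (Nat.ceil_lt_add_one (show 0 ≤ 1 / ε * X by positivity)).le
  have hsl : 1 ≤ s * l := one_le_mul_of_one_le_of_one_le hs1 hl1
  have hXl : X + 1 ≤ s * l * (b + e + 8) := by
    have h1 : s ≤ s * l := le_mul_of_one_le_right (by linarith) hl1
    have h2 : l ≤ s * l := le_mul_of_one_le_left (by linarith) hs1
    have h5 : N * p ≤ s * l * (b + 3) := hNp.trans (by gcongr)
    have h6 : e ≤ s * l * e := le_mul_of_one_le_left he hsl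
    linarith
  have hL3 : (L : ℝ) ≤ 1 / ε * l * s * (b + e + 8) := by
    calc (L : ℝ) ≤ 1 / ε * (X + 1) := by linarith
      _ ≤ 1 / ε * (s * l * (b + e + 8)) := by gcongr
      _ = _ := by ring
  have h2 : (0 : ℝ) < 2 := by norm_num
  refine ⟨N, L, ?_, ?_, ?_, ?_, ?_⟩
  · have : (1 : ℝ) ≤ N := by nlinarith
    exact_mod_cast this
  · rw [← Real.rpow_natCast]
    refine Real.rpow_le_rpow_of_exponent_le (by norm_num) ?_
    nlinarith
  · rw [← Real.rpow_add h2, ← Real.rpow_mul h2.le, ← Real.rpow_add h2]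
    have h5 : q * (b + 2) ≤ N * (q - p) := by
      have := mul_le_mul_of_nonneg_right hN1 hqp.le
      rwa [show κ * (b + 2) * (q - p) = q * (b + 2) by rw [hκ]; field_simp] at this
    calc (2 : ℝ) ^ ((b + -N) * q + N * p) ≤ 2 ^ (-2 : ℝ) :=
          Real.rpow_le_rpow_of_exponent_le (by norm_num) (by nlinarith)
      _ = 1 / 4 := by rw [Real.rpow_neg h2.le]; norm_num
  · have hk : κ = 2 ^ Real.logb 2 κ :=
      (Real.rpow_logb h2 (by norm_num) (by positivity)).symm
    have hll : 1 / ε = 2 ^ l := (Real.rpow_logb h2 (by norm_num) (by positivity)).symm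
    have hLX : X ≤ L * ε := by
      rw [one_div, inv_mul_le_iff₀ hε] at hL1
      linarith
    calc 2 ^ e * κ * (2 ^ (-(L * ε)) / ε) * 2 ^ (N * p)
        = 2 ^ e * κ * (2 ^ (-(L * ε)) * (1 / ε)) * 2 ^ (N * p) := by ring
      _ = 2 ^ e * 2 ^ Real.logb 2 κ * (2 ^ (-(L * ε)) * 2 ^ l) * 2 ^ (N * p) := by
          rw [← hk, ← hll]
      _ = 2 ^ (e + Real.logb 2 κ + (-(L * ε) + l) + N * p) := by
          simp only [← Real.rpow_add h2]
      _ ≤ 2 ^ (-2 : ℝ) :=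
          Real.rpow_le_rpow_of_exponent_le (by norm_num) (by linarith)
      _ = 1 / 4 := by rw [Real.rpow_neg h2.le]; norm_num
  · have hll : l = Real.log (1 / ε) / Real.log 2 := rfl
    have hs2 : s ≤ 2 ^ s := by
      have := one_add_mul_self_le_rpow_one_add (s := 1) (by norm_num) hs1
      norm_num at this
      linarith
    have hone : 1 ≤ 1 / ε * l * s := by
      have : 1 ≤ 1 / ε := by linarith
      exact one_le_mul_of_one_le_of_one_le (one_le_mul_of_one_le_of_one_le this hl1) hs1
    have hlog : 0 ≤ Real.log (1 / ε) := Real.log_nonneg (by linarith)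
    calc 4 * ((2 : ℝ) ^ (N * p) * κ * (C3 + C4 * L))
        ≤ 4 * ((2 : ℝ) ^ (s * (b + 3)) * s *
            (C3 * (1 / ε * l * s) + C4 * (1 / ε * l * s * (b + e + 8)))) := by
          have := le_mul_of_one_le_right h3 hone
          gcongr
          norm_num
      _ = 2 ^ (s * (b + 3)) * s * s * B * (1 / ε) * Real.log (1 / ε) := by
          rw [hll, hB]; field_simp
      _ ≤ 2 ^ (s * (b + 3)) * 2 ^ s * 2 ^ s * B * (1 / ε) * Real.log (1 / ε) := by gcongr
      _ = B * 2 ^ (s * (b + 5)) * (1 / ε) * Real.log (1 / ε) := by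
          rw [← Real.rpow_add h2, ← Real.rpow_add h2,
            show s * (b + 3) + s + s = s * (b + 5) by ring]
          ring
      _ ≤ (b + 5 + B) * 2 ^ ((b + 5 + B) * p * q / (q - p)) * (1 / ε) * Real.log (1 / ε) := by
          have : (b + 5 + B) * p * q / (q - p) = s * (b + 5 + B) := by rw [hs, hκ]; ring
          rw [this]
          have h5 : B ≤ b + 5 + B := by linarith
          have h6 : (2 : ℝ) ^ (s * (b + 5)) ≤ 2 ^ (s * (b + 5 + B)) :=
            Real.rpow_le_rpow_of_exponent_le (by norm_num)
              (mul_le_mul_of_nonneg_left (by linarith) (by linarith))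
          gcongr

/-! ### The main estimate -/

/-- `∑ₖ 2^{kp} v({M g > 2^k}) ≤ 2 ∫ (M g)^p v`. -/
lemma tsum_level_integral_le {n : ℕ} {v : (Fin n → ℝ) → ℝ≥0∞} (hv : Measurable v) {p : ℝ}
    (hp : 1 ≤ p) (g : (Fin n → ℝ) → ℝ≥0∞) :
    ∑' k : ℤ, ((2 : ℝ≥0∞) ^ k) ^ p * ∫⁻ x in {x | (2 : ℝ≥0∞) ^ k < maxOp n g x}, v x ≤
      2 * ∫⁻ x, maxOp n g x ^ p * v x := by
  have hm : ∀ k : ℤ, MeasurableSet {x | (2 : ℝ≥0∞) ^ k < maxOp n g x} := fun k =>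
    (isOpen_lt_maxOp g _).measurableSet
  have hmv : Measurable fun x => maxOp n g x ^ p * v x :=
    ((measurable_maxOp g).pow_const p).mul hv
  calc _ = ∑' k : ℤ, ∫⁻ x,
        (if (2 : ℝ≥0∞) ^ k < maxOp n g x then ((2 : ℝ≥0∞) ^ k) ^ p else 0) * v x := by
        refine tsum_congr fun k => ?_
        rw [← lintegral_const_mul _ hv, ← lintegral_indicator (hm k)]
        refine lintegral_congr fun x => ?_
        by_cases hx : (2 : ℝ≥0∞) ^ k < maxOp n g x
        · rw [indicator_of_mem (by exact hx), if_pos hx]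
        · rw [indicator_of_notMem (by exact hx), if_neg hx, zero_mul]
    _ = ∫⁻ x, ∑' k : ℤ,
        (if (2 : ℝ≥0∞) ^ k < maxOp n g x then ((2 : ℝ≥0∞) ^ k) ^ p else 0) * v x := by
        refine (lintegral_tsum fun k => ?_).symm
        exact ((Measurable.ite (hm k) measurable_const measurable_const).mul hv).aemeasurable
    _ ≤ ∫⁻ x, 2 * (maxOp n g x ^ p * v x) := by
        refine lintegral_mono fun x => ?_
        rw [ENNReal.tsum_mul_right, ← mul_assoc]
        exact mul_le_mul_left (tsum_level_le hp _) _
    _ = _ := lintegral_const_mul _ hmv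

/-- The theorem for a measurable extended-valued weight and indexed Whitney decompositions. -/
lemma main_estimate (n : ℕ) (hn : 1 ≤ n) :
    ∃ cn > (0 : ℝ), ∀ p q : ℝ, 1 < p → p < q →
      ∀ v : (Fin n → ℝ) → ℝ≥0∞, Measurable v → (∀ c r, ∫⁻ x in closedBall c r, v x ≠ ∞) →
      ∀ ε : ℝ, 0 < ε → ε < 1 / 2 → CqCond n q ε v →
      ∀ (g : (Fin n → ℝ) → ℝ≥0∞) (ρ : ℝ), 0 < ρ → (∀ x ∉ closedBall 0 ρ, g x = 0) →
      ∫⁻ x, g x ≠ 0 → ∫⁻ x, g x ≠ ∞ →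
      ∀ (ι : ℤ → Type) [∀ k, Countable (ι k)] (c : ∀ k, ι k → Fin n → ℝ) (r : ∀ k, ι k → ℝ),
      (∀ k : ℤ, IsWhitney {x | (2 : ℝ≥0∞) ^ k < maxOp n g x} (c k) (r k)) →
      ∑' k : ℤ, ((2 : ℝ≥0∞) ^ k) ^ p * ∑' i, tail n q v (hCube (c k i) (r k i)) ≤
        ENNReal.ofReal (cn * 2 ^ (cn * p * q / (q - p)) * (1 / ε) * Real.log (1 / ε)) *
          ∫⁻ x, maxOp n g x ^ p * v x := by
  have h2 : (0 : ℝ) < 2 := by norm_num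
  have hsn : 1 ≤ √(n : ℝ) := Real.one_le_sqrt.2 (by exact_mod_cast hn)
  -- In the recursion the far part has coefficient `(C1 2^{-N})^q`, and the local part contributes
  -- `C2 κ 2^{-Lε} / ε` to the coefficient of the tails.
  set C1 : ℝ := (6 * (5 * (7 + 32 * √n))) ^ n with hC1
  have hC11 : 1 ≤ C1 := one_le_pow₀ (by linarith)
  set C2 : ℝ := 32 ^ n * 2 * (16 * 5 ^ n) with hC2
  have hC21 : 1 ≤ C2 := by
    have h3 : (1 : ℝ) ≤ 32 ^ n := one_le_pow₀ (by norm_num)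
    have h4 : (1 : ℝ) ≤ 5 ^ n := one_le_pow₀ (by norm_num)
    nlinarith
  have hb : (2 : ℝ) ^ Real.logb 2 C1 = C1 := Real.rpow_logb h2 (by norm_num) (by linarith)
  have he : (2 : ℝ) ^ Real.logb 2 C2 = C2 := Real.rpow_logb h2 (by norm_num) (by linarith)
  obtain ⟨cn, hcn, hpar⟩ := exists_parameters (b := Real.logb 2 C1) (e := Real.logb 2 C2)
    (C3 := 32 ^ n * 2 * 430 ^ n) (C4 := 32 ^ n * 2 * (2 * 5 ^ n))
    (Real.logb_nonneg (by norm_num) hC11) (Real.logb_nonneg (by norm_num) hC21)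
    (by positivity) (by positivity)
  refine ⟨cn, hcn, fun p q hp hpq v hv hfin ε hε hε2 hC g ρ hρ hsupp hg0 hgt ι _ c r hW => ?_⟩
  obtain ⟨N, L, hN, hbN, hX, hY, hD⟩ := hpar p q ε hp hpq hε hε2
  rw [hb] at hbN hX
  rw [he] at hY
  have hqp : 0 < q - p := by linarith
  have hq0 : 0 < q := by linarith
  set κ := q / (q - p) with hκ
  have hκ1 : 1 ≤ κ := by rw [hκ, le_div_iff₀ hqp]; linarith
  have hκq : 1 + 1 / κ ≤ q := by
    have h3 : 1 / κ = 1 - p / q := by rw [hκ]; field_simp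
    have h4 : q * (p / q) = p := by field_simp
    have h5 : 0 < p / q := by positivity
    have h6 : p / q < 1 := (div_lt_one hq0).2 hpq
    rw [h3]
    nlinarith
  have h20 : (2 : ℝ≥0∞) ≠ 0 := by norm_num
  have h2t : (2 : ℝ≥0∞) ≠ ∞ := by norm_num
  set RHS := ∫⁻ x, maxOp n g x ^ p * v x with hRHS
  set Λ := cn * 2 ^ (cn * p * q / (q - p)) * (1 / ε) * Real.log (1 / ε) with hΛ
  have hΛ0 : 0 < Λ := by
    have : 0 < Real.log (1 / ε) := Real.log_pos (by rw [lt_div_iff₀ hε]; linarith)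
    positivity
  rcases eq_or_ne RHS ∞ with hinf | hfinR
  · rw [hinf, ENNReal.mul_top (by simpa using hΛ0)]
    exact le_top
  set S : ℤ → ℝ≥0∞ := fun k =>
    ((2 : ℝ≥0∞) ^ k) ^ p * ∑' i, tail n q v (hCube (c k i) (r k i)) with hS
  set T : ℤ → ℝ≥0∞ := fun k =>
    ((2 : ℝ≥0∞) ^ k) ^ p * ∫⁻ x in {x | (2 : ℝ≥0∞) ^ k < maxOp n g x}, v x with hT
  obtain ⟨A, hA, hap⟩ := apriori_bound hn hv hfin hε (by linarith) (by linarith) hpq.le hκ1 hκq hC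
    hρ.le hsupp hg0 hgt
  have hρn : ENNReal.ofReal (ρ ^ n) ≠ 0 := by
    simp only [ne_eq, ENNReal.ofReal_eq_zero, not_le]; positivity
  -- Below the level `2^k₀ ≈ ρ⁻ⁿ ∫ g` the a priori bound applies.
  obtain ⟨k₀, hk₀, -⟩ := ENNReal.exists_mem_Ioc_zpow
    (ENNReal.div_ne_zero.2 ⟨hg0, ENNReal.ofReal_ne_top (r := ρ ^ n)⟩)
    (ENNReal.div_ne_top hgt hρn) (by norm_num : (1 : ℝ≥0∞) < 2) h2t
  have hSM : ∀ k ≤ k₀, S k ≤ A * RHS := by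
    intro k hk
    refine hap _ (ENNReal.zpow_pos h20 h2t k).ne' (ENNReal.zpow_ne_top h20 h2t k) ?_ _ _ _ (hW k)
    calc _ ≤ (2 : ℝ≥0∞) ^ k₀ * ENNReal.ofReal (ρ ^ n) :=
          mul_le_mul_left (ENNReal.zpow_le_of_le (by norm_num) hk) _
      _ ≤ _ := (ENNReal.le_div_iff_mul_le (Or.inl hρn) (Or.inl ENNReal.ofReal_ne_top)).1 hk₀.le
  set D : ℝ := 2 ^ (N * p) * κ * (32 ^ n * 2 * 430 ^ n + 32 ^ n * 2 * (2 * 5 ^ n) * L) with hDdef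
  have hrec : ∀ k, S k ≤ 1 / 2 * S (k - N) + ENNReal.ofReal D * T (k - N) := by
    intro k
    set a : ℝ≥0∞ := (2 : ℝ≥0∞) ^ (k - N : ℤ) with ha
    have hN2 : ENNReal.ofReal (2 ^ N) = 2 ^ N := by
      rw [ENNReal.ofReal_pow h2.le]; norm_num
    have hka : (2 : ℝ≥0∞) ^ k = ENNReal.ofReal (2 ^ N) * a := by
      rw [hN2, ha, ← zpow_natCast, ← ENNReal.zpow_add h20 h2t]
      congr 1
      ring
    have hGa : ((2 : ℝ≥0∞) ^ k) ^ p = ENNReal.ofReal (2 ^ (N * p)) * a ^ p := by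
      rw [hka, ENNReal.mul_rpow_of_nonneg _ _ (by linarith),
        ENNReal.ofReal_rpow_of_pos (by positivity), ← Real.rpow_natCast, ← Real.rpow_mul h2.le]
    have hNN : (2 : ℝ) ^ N * 2 ^ (-(N : ℝ)) = 1 := by
      rw [← Real.rpow_natCast, ← Real.rpow_add h2]; simp
    set δ : ℝ := (5 * (7 + 32 * √n)) ^ n * 2 ^ (-(N : ℝ)) with hδ
    have key := whitney_recursion hn hv hfin hε (by linarith) hκ1 hκq hC g
      (α := a) (β := (2 : ℝ≥0∞) ^ k) (δ := ENNReal.ofReal δ)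
      (ENNReal.zpow_pos h20 h2t k).ne' (ENNReal.zpow_ne_top h20 h2t k) ?_ ?_ (hW k)
      (hW (k - N)) L
    · have h6 : (6 ^ n * ENNReal.ofReal δ) ^ q = ENNReal.ofReal ((C1 * 2 ^ (-(N : ℝ))) ^ q) := by
        rw [show (6 : ℝ≥0∞) ^ n = ENNReal.ofReal (6 ^ n) by
          rw [ENNReal.ofReal_pow (by norm_num)]; norm_num, ← ENNReal.ofReal_mul (by positivity),
          ENNReal.ofReal_rpow_of_pos (by positivity), hδ, hC1,
          mul_pow 6 (5 * (7 + 32 * √(n : ℝ))), mul_assoc]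
      have h5 : (5 : ℝ≥0∞) ^ n = ENNReal.ofReal (5 ^ n) := by
        rw [ENNReal.ofReal_pow (by norm_num)]; norm_num
      have h16 : (16 : ℝ≥0∞) = ENNReal.ofReal 16 := by norm_num
      have h22 : (2 : ℝ≥0∞) = ENNReal.ofReal 2 := by norm_num
      have hcoef : ENNReal.ofReal (2 ^ (N * p)) * ((6 ^ n * ENNReal.ofReal δ) ^ q +
          ENNReal.ofReal (32 ^ n * (2 * κ)) *
          (16 * 5 ^ n * ENNReal.ofReal (2 ^ (-(L * ε)) / ε))) ≤ 1 / 2 := by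
        rw [h6, h5, h16, ← ENNReal.ofReal_mul (by positivity), ← ENNReal.ofReal_mul (by positivity),
          ← ENNReal.ofReal_mul (by positivity), ← ENNReal.ofReal_add (by positivity)
          (by positivity), ← ENNReal.ofReal_mul (by positivity),
          show (1 / 2 : ℝ≥0∞) = ENNReal.ofReal (1 / 2) by
            rw [ENNReal.ofReal_div_of_pos h2]; norm_num]
        refine ENNReal.ofReal_le_ofReal ?_
        rw [hC2] at hY
        linarith
      have hcoef2 : ENNReal.ofReal (2 ^ (N * p)) * (ENNReal.ofReal (32 ^ n * (2 * κ)) *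
          (ENNReal.ofReal (430 ^ n) + 2 * 5 ^ n * L)) = ENNReal.ofReal D := by
        rw [h5, h22, ← ENNReal.ofReal_natCast L, ← ENNReal.ofReal_mul (by positivity),
          ← ENNReal.ofReal_mul (by positivity), ← ENNReal.ofReal_add (by positivity)
          (by positivity), ← ENNReal.ofReal_mul (by positivity),
          ← ENNReal.ofReal_mul (by positivity)]
        congr 1
        rw [hDdef]
        ring
      calc S k ≤ ((2 : ℝ≥0∞) ^ k) ^ p * _ := mul_le_mul_right key _
        _ = (ENNReal.ofReal (2 ^ (N * p)) * ((6 ^ n * ENNReal.ofReal δ) ^ q +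
              ENNReal.ofReal (32 ^ n * (2 * κ)) *
              (16 * 5 ^ n * ENNReal.ofReal (2 ^ (-(L * ε)) / ε)))) * S (k - N) +
            (ENNReal.ofReal (2 ^ (N * p)) * (ENNReal.ofReal (32 ^ n * (2 * κ)) *
              (ENNReal.ofReal (430 ^ n) + 2 * 5 ^ n * L))) * T (k - N) := by
            rw [hGa]
            simp only [hS, hT, ← ha]
            ring
        _ ≤ _ := by
            rw [hcoef2]
            exact add_le_add (mul_le_mul_left hcoef _) le_rfl
    · rw [hka]
      refine mul_le_mul_left (ENNReal.ofReal_le_ofReal (le_trans ?_ hbN)) _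
      exact pow_le_pow_left₀ (by positivity) (by linarith) n
    · rw [hka]
      refine le_of_eq ?_
      rw [mul_right_comm, ← ENNReal.ofReal_mul (by positivity), hδ]
      congr 2
      linear_combination -(5 * (7 + 32 * √n)) ^ n * hNN
  calc ∑' k, S k ≤ 2 * ENNReal.ofReal D * ∑' k, T k :=
        tsum_le_of_recursion hN (ENNReal.mul_ne_top hA hfinR) hSM hrec
    _ ≤ 2 * ENNReal.ofReal D * (2 * RHS) :=
        mul_le_mul_right (tsum_level_integral_le hv hp.le g) _
    _ = ENNReal.ofReal (4 * D) * RHS := by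
        rw [ENNReal.ofReal_mul (p := 4) (by norm_num), show ENNReal.ofReal 4 = 2 * 2 by norm_num]
        ring
    _ ≤ _ := mul_le_mul_left (ENNReal.ofReal_le_ofReal hD) _

/-! ### The theorem for a real-valued weight -/

/-- **Quantified Lemma 4 of Sawyer.** For `1 < p < q`, a weight satisfying the `C_q`
condition with constant `2` and exponent `ε ∈ (0,1/2)`, a bounded compactly supported
`f` not a.e. zero, and Whitney decompositions `W(k)` of the level sets
`Ω_k = {Mf > 2^k}`, the Marcinkiewicz-type integral
`M_{p,q}(Mf)(x)^p = ∑_k ∑_{Q ∈ W(k)} 2^{kp} (Mχ_Q(x))^q` satisfies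
`∫ (M_{p,q} Mf)^p w ≤ cₙ 2^{cₙ pq/(q-p)} (1/ε) log(1/ε) ∫ (Mf)^p w`. -/
theorem statement13 (n : ℕ) (hn : 1 ≤ n) :
    ∃ cn > (0 : ℝ),
      ∀ (p q : ℝ), 1 < p → p < q →
      ∀ (w : (Fin n → ℝ) → ℝ), (∀ x, 0 ≤ w x) → LocallyIntegrable w volume →
      ∀ (ε : ℝ), 0 < ε → ε < 1 / 2 →
      (∀ (c₀ : Fin n → ℝ) (r₀ : ℝ), 0 < r₀ → ∀ E ⊆ closedBall c₀ r₀, MeasurableSet E →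
        ∫⁻ x in E, ENNReal.ofReal (w x) ≤
          2 * (volume E / volume (closedBall c₀ r₀)) ^ ε *
            cpTail n q w (closedBall c₀ r₀)) →
      ∀ (f : (Fin n → ℝ) → ℝ), Measurable f → HasCompactSupport f →
        (∃ Cf : ℝ, ∀ x, |f x| ≤ Cf) →
        ¬ (∀ᵐ x ∂(volume : Measure (Fin n → ℝ)), f x = 0) →
      ∀ (W : ℤ → Set (Set (Fin n → ℝ))),
        (∀ k, (W k).Countable) →
        (∀ k, ∀ Q ∈ W k, ∃ (cc : Fin n → ℝ) (rr : ℝ), 0 < rr ∧ Q = hCube cc rr) →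
        (∀ k, (W k).Pairwise Disjoint) →
        (∀ k, ⋃₀ W k = {x | (2 : ℝ≥0∞) ^ (k : ℤ) < mAbs n f x}) →
        (∀ k, ∀ Q ∈ W k,
          5 ≤ eucSetDist Q {x | (2 : ℝ≥0∞) ^ (k : ℤ) < mAbs n f x}ᶜ / eucDiam Q ∧
          eucSetDist Q {x | (2 : ℝ≥0∞) ^ (k : ℤ) < mAbs n f x}ᶜ / eucDiam Q ≤ 15) →
        ∫⁻ x, (∑' (k : ℤ), ∑' (Q : W k),
              (2 : ℝ≥0∞) ^ ((k : ℝ) * p) * maxOp n (chi n (Q : Set (Fin n → ℝ))) x ^ q) *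
            ENNReal.ofReal (w x) ≤
          ENNReal.ofReal (cn * 2 ^ (cn * p * q / (q - p)) * (1 / ε) * Real.log (1 / ε)) *
            ∫⁻ x, mAbs n f x ^ p * ENNReal.ofReal (w x) := by
  obtain ⟨cn, hcn, hmain⟩ := main_estimate n hn
  refine ⟨cn, hcn, fun p q hp hpq w _ hwloc ε hε hε2 hCq f hfm hfc hfb hf0 W hWc hWcube
    hWdisj hWunion hWdist => ?_⟩
  have hwm : AEMeasurable w volume := hwloc.aestronglyMeasurable.aemeasurable
  -- A locally integrable function is only a.e. measurable: pass to a measurable representative.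
  set v : (Fin n → ℝ) → ℝ≥0∞ := fun x => ENNReal.ofReal (hwm.mk w x) with hv
  have hvm : Measurable v := hwm.measurable_mk.ennreal_ofReal
  have hae : (fun x => ENNReal.ofReal (w x)) =ᵐ[volume] v := by
    filter_upwards [hwm.ae_eq_mk] with x hx
    rw [hv, hx]
  have hmul : ∀ F : (Fin n → ℝ) → ℝ≥0∞,
      ∫⁻ x, F x * ENNReal.ofReal (w x) = ∫⁻ x, F x * v x := fun F =>
    lintegral_congr_ae (by filter_upwards [hae] with x hx; rw [hx])
  have hset : ∀ E : Set (Fin n → ℝ),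
      ∫⁻ x in E, ENNReal.ofReal (w x) = ∫⁻ x in E, v x := fun E =>
    lintegral_congr_ae (ae_restrict_of_ae hae)
  have hfin : ∀ c r, ∫⁻ x in closedBall c r, v x ≠ ∞ := fun c r => by
    rw [← hset]
    exact (hwloc.integrableOn_isCompact (isCompact_closedBall c r)).lintegral_lt_top.ne
  have hC : CqCond n q ε v := fun c r hr E hE hEm => by
    have h := hCq c r hr E hE hEm
    rwa [hset, cpTail, hmul] at h
  obtain ⟨ρ, hρ, hfρ⟩ := hfc.isCompact.isBounded.subset_closedBall_lt 0 0
  obtain ⟨Cf, hCf⟩ := hfb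
  set g : (Fin n → ℝ) → ℝ≥0∞ := fun y => ENNReal.ofReal |f y| with hg
  have hgm : Measurable g := (measurable_norm.comp hfm).ennreal_ofReal
  have hsupp : ∀ x ∉ closedBall 0 ρ, g x = 0 := fun x hx => by
    simp [hg, image_eq_zero_of_notMem_tsupport fun h => hx (hfρ h)]
  have hg0 : ∫⁻ x, g x ≠ 0 := by
    rw [ne_eq, lintegral_eq_zero_iff hgm]
    refine fun h => hf0 ?_
    filter_upwards [h] with x hx
    simpa [hg] using hx
  have hgt : ∫⁻ x, g x ≠ ∞ := by
    have h1 : ∫⁻ x, g x = ∫⁻ x in closedBall 0 ρ, g x := by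
      rw [← lintegral_indicator measurableSet_closedBall]
      congr 1
      refine (indicator_eq_self.2 fun y hy => ?_).symm
      by_contra hcon
      exact hy (hsupp y hcon)
    have h2 : ∫⁻ x in closedBall 0 ρ, g x ≤
        ENNReal.ofReal Cf * volume (closedBall (0 : Fin n → ℝ) ρ) := by
      rw [← setLIntegral_const]
      exact lintegral_mono fun x => ENNReal.ofReal_le_ofReal (hCf x)
    rw [h1]
    exact ne_top_of_le_ne_top (ENNReal.mul_ne_top ENNReal.ofReal_ne_top (vol_cb_top _ _)) h2
  choose cc rr hrr hcube using hWcube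
  have : ∀ k, Countable (W k) := fun k => (hWc k).to_subtype
  have hmAbs : mAbs n f = maxOp n g := rfl
  have hW : ∀ k : ℤ, IsWhitney {x | (2 : ℝ≥0∞) ^ k < maxOp n g x}
      (fun Q : W k => cc k Q Q.2) (fun Q : W k => rr k Q Q.2) := by
    intro k
    have hgeo : ∀ Q : W k, _ := fun Q => whitney_geom hn (hrr k Q Q.2)
      (Ω := {x | (2 : ℝ≥0∞) ^ k < maxOp n g x})
      (by rw [← hcube k Q Q.2]; exact (hWdist k Q Q.2).1)
      (by rw [← hcube k Q Q.2]; exact (hWdist k Q Q.2).2)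
    refine ⟨fun Q => hrr k Q Q.2, ?_, ?_, fun Q => (hgeo Q).1, fun Q => (hgeo Q).2⟩
    · intro P Q hPQ
      rw [← hcube k P P.2, ← hcube k Q Q.2]
      exact hWdisj k P.2 Q.2 fun h => hPQ (Subtype.ext h)
    · rw [← hmAbs, ← hWunion k, sUnion_eq_iUnion]
      exact iUnion_congr fun Q => (hcube k Q Q.2).symm
  have key := hmain p q hp hpq v hvm hfin ε hε hε2 hC g ρ hρ hsupp hg0 hgt (fun k => W k) _ _ hW
  rw [hmul, hmul, hmAbs]
  refine le_trans (le_of_eq ?_) key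
  have hterm : ∀ (k : ℤ) (Q : W k), Measurable fun x =>
      (2 : ℝ≥0∞) ^ ((k : ℝ) * p) * maxOp n (chi n (Q : Set (Fin n → ℝ))) x ^ q * v x :=
    fun k Q => (((measurable_maxOp _).pow_const q).const_mul _).mul hvm
  simp only [← ENNReal.tsum_mul_right]
  rw [lintegral_tsum fun k => (Measurable.tsum fun Q => hterm k Q).aemeasurable]
  refine tsum_congr fun k => ?_
  rw [lintegral_tsum fun Q => (hterm k Q).aemeasurable, ← ENNReal.tsum_mul_left]
  refine tsum_congr fun Q => ?_
  rw [← hcube k Q Q.2, tail, ← lintegral_const_mul _ (measurable_tail hvm q _),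
    ENNReal.rpow_mul, ENNReal.rpow_intCast]
  simp only [mul_assoc]

end
end
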